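/- Let n ≥ 2, let Ω₁ ⊂ ℝⁿ be a nonempty bounded open set and let Ω₂ ⊂ ℝⁿ be a nonempty bounded open convex set, with closure(Ω₁) ∩ closure(Ω₂) = ∅. Then there exist constants σ̃ > 0 and C > 1 (depending only on Ω₁ and Ω₂) such that for every differentiable g : ℝⁿ → ℝ with gradient ∇g satisfying ∫_{Ω₂} g(x)² dx < ∞, ∫_{Ω₂} |∇g(x)|² dx < ∞ and ∫_{Ω₂} g(x)² dx > 0, one has ‖g‖_{H¹(Ω₂)} ≤ exp( C · (1 + (‖g‖_{H¹(Ω₂)} / ‖g‖_{L²(Ω₂)})^{σ̃}) ) · ( Σ_{j=1}^{n} ∫_{Ω₁} ((R_j^{Ω₂} g)(x))² dx )^{1/2}. -/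

import Mathlib

/-!
Fix a ball `B(x₀, r)` inside `Ω₁` and write `Ω = Ω₂`. The proof turns smallness of the Riesz
transforms on `Ω₁` into smallness of `∫ g k` for kernels `k` that approximate the identity at scale
`N^(-1/2)`, and then uses the Dirichlet energy of `g` to conclude.

*From Riesz transforms to moments.* The Riesz transforms are Lipschitz away from `Ω`, so their `L²`
smallness gives pointwise smallness near `x₀` (`truncRiesz_pointwise`). The kernels
`(x_j - y_j) |x - y|^(-n-1)` have divergence `-|x - y|^(-n-1)` (`Geo.base`), and the Laplacian of
`|x - y|^(-2μ)` is `2μ (2μ + 2 - n) |x - y|^(-2μ-2)`, a nonzero multiple when `2μ ≥ n + 1`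
(`Geo.step`, `Geo.laplace_iter`). Hence all `∫ g |x - y|^(-n-1-2m)`, `x` near `x₀`, are small. No
derivative is taken: a Taylor coefficient in a parameter `s` is a linear combination of the values at
`0, h, …, d h`, up to a Taylor error (`extraction`). With the inversion `Z = (y - x₀) / |y - x₀|²` and
expansion along lines through `x₀`, the moments `∫ g |x₀ - y|^(-n-1-2b) ⟨ξ, Z⟩^k` with `b, k ≤ N` are
small as well (`Geo.line`, `Geo.moments`).

*From moments to the kernel.* Let `θ(w, y)` be a small multiple of the squared distance between the
inverted points of `w` and `y`. For fixed `w`, `1 - θ` is affine in `|y - x₀|⁻²` and `⟨ξ, Z⟩` for a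
suitable `ξ` (`one_sub_theta`), so `∫ g(y) |x₀ - y|^(-n-1) (1 - θ(w, y))^N dy` is small uniformly in
`w ∈ Ω` (`Geo.kernel`).

*Energy.* Multiply by `g(w) |x₀ - w|^(-n-1)`, integrate over `w`, and use
`2 g(w) g(y) = g(w)² + g(y)² - (g(w) - g(y))²`. Since `θ` is comparable to `|w - y|²` and `Ω` is
convex, the kernel has mass at least of order `N^(-n/2)` (`Geo.mass`), while the difference term is at
most of order `N^(-n/2-1) ∫ |∇g|²` (`nonlocal_energy_le`). So `c₁ ‖g‖² - c₂ ‖∇g‖² / N` is small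
(`Geo.energy`).

*Choice of parameters.* Taking `N` comparable to `(‖g‖_{H¹} / ‖g‖_{L²})²` absorbs the gradient term,
and the step `h` is the inverse of a quantity of moderate growth in `N`, chosen so that the terms
proportional to `‖g‖` on the right are absorbed too (`Geo.main`). Every loss is a product of linearly
many in `N` factors of moderate growth, hence at most the exponential of a power of `N`
(`Moderate.pow_lin`), which is the asserted bound (`exp_scale_le`).
-/

open MeasureTheory Set

/-- Unnormalized `j`-th truncated Riesz transform:
`(R_j^Ω f)(x) = ∫_Ω f(y) (x_j - y_j)/|x - y|^{n+1} dy`. -/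
noncomputable def truncRiesz (n : ℕ) (Ω : Set (EuclideanSpace ℝ (Fin n))) (j : Fin n)
    (f : EuclideanSpace ℝ (Fin n) → ℝ) (x : EuclideanSpace ℝ (Fin n)) : ℝ :=
  ∫ y in Ω, f y * (x j - y j) / ‖x - y‖ ^ (n + 1)

/-! ### Binomial series, coefficients of polynomials, moderate growth -/

/-- Coefficients of the binomial series `(1 - u)^(-μ) = ∑ cc μ j * u^j`. -/
noncomputable def cc (μ : ℝ) (j : ℕ) : ℝ := ∏ l ∈ Finset.range j, (μ + l) / (l + 1)

lemma cc_nonneg {μ : ℝ} (hμ : 0 < μ) (j : ℕ) : 0 ≤ cc μ j :=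
  Finset.prod_nonneg fun l _ => by positivity

lemma cc_pos {μ : ℝ} (hμ : 0 < μ) (j : ℕ) : 0 < cc μ j :=
  Finset.prod_pos fun l _ => by positivity

lemma cc_eq_choose (μ : ℝ) (j : ℕ) : Ring.choose (μ + j - 1) j = cc μ j := by
  rw [Ring.choose_eq_smul, ← Polynomial.aeval_eq_smeval, Polynomial.aeval_def,
    ← Polynomial.eval_map, descPochhammer_map, descPochhammer_eval_eq_prod_range]
  rw [← Finset.prod_range_reflect, cc, Finset.prod_div_distrib]
  have h1 : ∏ l ∈ Finset.range j, ((l : ℝ) + 1) = (j.factorial : ℝ) := by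
    rw [← Finset.prod_range_add_one_eq_factorial]; push_cast; rfl
  rw [h1, smul_eq_mul, div_eq_inv_mul]
  congr 1
  refine Finset.prod_congr rfl fun l hl => ?_
  have : l + 1 ≤ j := Finset.mem_range.1 hl
  rw [Nat.sub_sub, Nat.cast_sub (by omega)]
  push_cast; ring

lemma cc_hasSum {μ u : ℝ} (hu : |u| < 1) :
    HasSum (fun j => cc μ j * u ^ j) ((1 - u) ^ (-μ)) := by
  have h := (Real.one_div_one_sub_rpow_hasFPowerSeriesOnBall_zero μ).hasSum
    (y := u) (by simpa [Metric.mem_eball, edist_dist, Real.dist_eq] using hu)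
  simp only [FormalMultilinearSeries.ofScalars_apply_eq, zero_add, smul_eq_mul, cc_eq_choose] at h
  rw [Real.rpow_neg (by linarith [(abs_lt.1 hu).2]), ← one_div]
  exact h

/-- Remainder estimate for the binomial series on `|u| ≤ 1/2`. -/
lemma cc_remainder {μ u : ℝ} (hμ : 0 < μ) (hu : |u| ≤ 1 / 2) (J : ℕ) :
    |(1 - u) ^ (-μ) - ∑ j ∈ Finset.range J, cc μ j * u ^ j| ≤ 2 ^ μ * (2 * |u|) ^ J := by
  have h1 := cc_hasSum (μ := μ) (u := u) (by linarith)
  have h2 := cc_hasSum (μ := μ) (u := 1 / 2) (by rw [abs_of_pos] <;> norm_num)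
  have h3 : ((1 : ℝ) - 1 / 2) ^ (-μ) = 2 ^ μ := by
    rw [show (1 : ℝ) - 1 / 2 = 2⁻¹ by norm_num, Real.inv_rpow (by norm_num), Real.rpow_neg (by norm_num),
      inv_inv]
  rw [h3] at h2
  have h4 := (hasSum_nat_add_iff' J).2 h1
  have h5 := ((hasSum_nat_add_iff' J).2 h2)
  rw [← h4.tsum_eq]
  have hs : Summable fun j => cc μ (j + J) * (1 / 2 : ℝ) ^ (j + J) := h5.summable
  have h6 : ∀ j, ‖cc μ (j + J) * u ^ (j + J)‖ ≤
      (2 * |u|) ^ J * (cc μ (j + J) * (1 / 2 : ℝ) ^ (j + J)) := by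
    intro j
    rw [norm_mul, norm_pow, Real.norm_eq_abs, Real.norm_eq_abs, abs_of_nonneg (cc_nonneg hμ _)]
    have : |u| ^ (j + J) ≤ (2 * |u|) ^ J * (1 / 2 : ℝ) ^ (j + J) := by
      have e : (2 * |u|) ^ J * (1 / 2 : ℝ) ^ (j + J) = |u| ^ J * (1 / 2) ^ j := by
        rw [mul_pow, pow_add, one_div]
        have : (2 : ℝ) ^ J * (2⁻¹) ^ J = 1 := by rw [← mul_pow]; norm_num
        linear_combination (|u| ^ J * 2⁻¹ ^ j) * this
      rw [e, pow_add, mul_comm]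
      gcongr
    calc _ ≤ cc μ (j + J) * ((2 * |u|) ^ J * (1 / 2 : ℝ) ^ (j + J)) := by
          gcongr; exact cc_nonneg hμ _
      _ = _ := by ring
  have h7 := tsum_of_norm_bounded (hs.mul_left ((2 * |u|) ^ J)).hasSum h6
  rw [Real.norm_eq_abs] at h7
  refine h7.trans ?_
  rw [tsum_mul_left, mul_comm, h5.tsum_eq]
  gcongr
  have : 0 ≤ ∑ i ∈ Finset.range J, cc μ i * (1 / 2 : ℝ) ^ i :=
    Finset.sum_nonneg fun i _ => mul_nonneg (cc_nonneg hμ _) (by positivity)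
  linarith

open Polynomial in
/-- Coefficient bound for a product of affine factors with small coefficients. -/
lemma coeff_prod_le {ι : Type*} (s : Finset ι) (f : ι → ℝ[X]) (a : ι → ℝ)
    (ha : ∀ i, 0 ≤ a i) (h : ∀ i ∈ s, ∃ c x : ℝ, f i = C c * (X - C x) ∧ |c| ≤ 1 ∧ |x| ≤ a i) (k : ℕ) :
    |(∏ i ∈ s, f i).coeff k| ≤ ∏ i ∈ s, (1 + a i) := by
  classical
  induction s using Finset.induction_on generalizing k with
  | empty =>
    simp only [Finset.prod_empty, coeff_one]; split_ifs <;> simp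
  | insert i s hi ih =>
    rw [Finset.prod_insert hi, Finset.prod_insert hi]
    obtain ⟨c, x, hf, hc, hx⟩ := h i (Finset.mem_insert_self _ _)
    have ih' := fun k => ih (fun j hj => h j (Finset.mem_insert_of_mem hj)) k
    rw [hf, mul_assoc, coeff_C_mul, sub_mul, coeff_sub, coeff_C_mul, abs_mul]
    set P := ∏ i ∈ s, f i
    set B := ∏ i ∈ s, (1 + a i)
    have hB : 0 ≤ B := Finset.prod_nonneg fun i _ => by linarith [ha i]
    have hX : |(X * P).coeff k| ≤ B := by
      cases k with
      | zero => simpa using hB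
      | succ k => rw [coeff_X_mul]; exact ih' k
    calc |c| * |(X * P).coeff k - x * P.coeff k| ≤ 1 * (B + a i * B) := by
          gcongr
          refine (abs_sub _ _).trans ?_
          rw [abs_mul]
          gcongr
          · exact ha i
          · exact ih' k
      _ = _ := by ring

open Polynomial in
/-- The coefficients of a polynomial of degree `≤ d` are bounded linear combinations of its
values at `0, 1, …, d`. -/
lemma exists_coeff_functional (d k : ℕ) : ∃ q : ℕ → ℝ,
    (∀ i, |q i| ≤ (d + 1 : ℝ) ^ (d + 1)) ∧
    ∀ P : ℝ[X], P.natDegree ≤ d → P.coeff k = ∑ i ∈ Finset.range (d + 1), q i * P.eval (i : ℝ) := by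
  classical
  refine ⟨fun i => if i ∈ Finset.range (d + 1) then
    (Lagrange.basis (Finset.range (d + 1)) (fun i : ℕ => (i : ℝ)) i).coeff k else 0, ?_, ?_⟩
  · intro i
    dsimp only
    split_ifs with hi
    · rw [Lagrange.basis]
      refine (coeff_prod_le _ _ (fun _ => (d : ℝ)) (fun _ => by positivity) ?_ k).trans ?_
      · intro j hj
        refine ⟨_, _, rfl, ?_, ?_⟩
        · have hne : (i : ℤ) - j ≠ 0 := by
            have := (Finset.mem_erase.1 hj).1
            omega
          have : (1 : ℝ) ≤ |(i : ℝ) - j| := by exact_mod_cast Int.one_le_abs hne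
          rw [abs_inv]
          exact inv_le_one_of_one_le₀ this
        · have := Finset.mem_range.1 (Finset.mem_erase.1 hj).2
          rw [abs_of_nonneg (by positivity)]
          exact_mod_cast (by omega : j ≤ d)
      · rw [Finset.prod_const, Finset.card_erase_of_mem hi, Finset.card_range, add_comm (1:ℝ)]
        refine pow_le_pow_right₀ (by linarith [(Nat.cast_nonneg d : (0:ℝ) ≤ d)]) (by omega)
    · rw [abs_zero]; positivity
  · intro P hP
    have hinj : Set.InjOn (fun i : ℕ => (i : ℝ)) (Finset.range (d + 1) : Set ℕ) :=
      fun a _ b _ h => Nat.cast_injective h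
    have h := Lagrange.eq_interpolate (s := Finset.range (d + 1)) (f := P) hinj (by
      rw [Finset.card_range]
      exact lt_of_le_of_lt degree_le_natDegree (by exact_mod_cast (by omega)))
    conv_lhs => rw [h]
    rw [Lagrange.interpolate_apply, finsetSum_coeff]
    refine Finset.sum_congr rfl fun i hi => ?_
    rw [coeff_C_mul, mul_comm]
    simp only [if_pos hi]

/-- Moderate growth: at most the exponential of a polynomial. The base `N + 2` lets a larger exponent
`p` absorb multiplicative constants, also for small `N`. -/
def Moderate (f : ℕ → ℝ) : Prop := ∃ p : ℕ, ∀ N, |f N| ≤ Real.exp (((N : ℝ) + 2) ^ p)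

lemma two_le_N2 (N : ℕ) : (2 : ℝ) ≤ (N : ℝ) + 2 := by linarith [(Nat.cast_nonneg N : (0:ℝ) ≤ N)]

namespace Moderate

lemma mul {f g : ℕ → ℝ} (hf : Moderate f) (hg : Moderate g) : Moderate fun N => f N * g N := by
  obtain ⟨p, hp⟩ := hf
  obtain ⟨q, hq⟩ := hg
  refine ⟨max p q + 1, fun N => ?_⟩
  have h2 := two_le_N2 N
  rw [abs_mul]
  calc |f N| * |g N| ≤ Real.exp (((N : ℝ) + 2) ^ p) * Real.exp (((N : ℝ) + 2) ^ q) := by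
        gcongr <;> simp_all
    _ = Real.exp (((N : ℝ) + 2) ^ p + ((N : ℝ) + 2) ^ q) := by rw [Real.exp_add]
    _ ≤ _ := by
      apply Real.exp_le_exp.2
      have h3 : ((N : ℝ) + 2) ^ p ≤ ((N : ℝ) + 2) ^ max p q :=
        pow_le_pow_right₀ (by linarith) (le_max_left _ _)
      have h4 : ((N : ℝ) + 2) ^ q ≤ ((N : ℝ) + 2) ^ max p q :=
        pow_le_pow_right₀ (by linarith) (le_max_right _ _)
      have h5 : 0 ≤ ((N : ℝ) + 2) ^ max p q := by positivity
      rw [pow_succ]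
      nlinarith

lemma mono {f g : ℕ → ℝ} (hg : Moderate g) (h : ∀ N, |f N| ≤ |g N|) : Moderate f := by
  obtain ⟨p, hp⟩ := hg
  exact ⟨p, fun N => (h N).trans (hp N)⟩

lemma const (c : ℝ) : Moderate fun _ => c := by
  obtain ⟨m, hm⟩ := exists_nat_ge |c|
  refine ⟨m, fun N => ?_⟩
  have h2 := two_le_N2 N
  have h1 : (m : ℝ) ≤ 2 ^ m := by exact_mod_cast Nat.lt_two_pow_self.le
  have h3 : (2 : ℝ) ^ m ≤ ((N : ℝ) + 2) ^ m := pow_le_pow_left₀ (by norm_num) h2 m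
  have := Real.add_one_le_exp (((N : ℝ) + 2) ^ m)
  linarith

/-- The exponent may itself grow linearly with the scale: `exp (N ^ p)` is stable under powers of
linear order in `N`. -/
lemma pow_lin {f : ℕ → ℝ} (hf : Moderate f) (a b : ℕ) : Moderate fun N => f N ^ (a * N + b) := by
  obtain ⟨p, hp⟩ := hf
  obtain ⟨m, hm⟩ := exists_nat_ge ((a + b : ℕ) : ℝ)
  refine ⟨p + (m + 1), fun N => ?_⟩
  have h2 := two_le_N2 N
  rw [abs_pow]
  calc |f N| ^ (a * N + b) ≤ Real.exp (((N : ℝ) + 2) ^ p) ^ (a * N + b) := by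
        gcongr; exact hp N
    _ = Real.exp (((a * N + b : ℕ) : ℝ) * ((N : ℝ) + 2) ^ p) := by rw [← Real.exp_nat_mul]
    _ ≤ _ := by
      apply Real.exp_le_exp.2
      rw [pow_add, mul_comm]
      gcongr
      have h1 : (m : ℝ) ≤ 2 ^ m := by exact_mod_cast Nat.lt_two_pow_self.le
      have h3 : (2 : ℝ) ^ m ≤ ((N : ℝ) + 2) ^ m := pow_le_pow_left₀ (by norm_num) h2 m
      rw [pow_succ]
      push_cast at hm ⊢
      have ha : (0:ℝ) ≤ a := Nat.cast_nonneg a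
      have hb : (0:ℝ) ≤ b := Nat.cast_nonneg b
      have hN : (0:ℝ) ≤ N := Nat.cast_nonneg N
      have : (a : ℝ) + b ≤ ((N : ℝ) + 2) ^ m := by linarith
      nlinarith [mul_nonneg hb hN]

lemma linear (a b : ℕ) : Moderate fun N => (a : ℝ) * N + b := by
  have h := (const (Real.exp 1)).pow_lin a b
  refine h.mono fun N => ?_
  rw [← Real.exp_nat_mul, abs_of_nonneg (by positivity), abs_of_nonneg (by positivity)]
  push_cast
  have := Real.add_one_le_exp ((a * (N:ℝ) + b) * 1)
  linarith

lemma add {f g : ℕ → ℝ} (hf : Moderate f) (hg : Moderate g) : Moderate fun N => f N + g N := by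
  obtain ⟨p, hp⟩ := hf
  obtain ⟨q, hq⟩ := hg
  have := Moderate.mul (f := fun N : ℕ => Real.exp (((N : ℝ) + 2) ^ p))
    (g := fun N : ℕ => Real.exp (((N : ℝ) + 2) ^ q)) ⟨p, fun N => by simp⟩ ⟨q, fun N => by simp⟩
  refine ((Moderate.const 2).mul this).mono fun N => ?_
  have h1 := hp N
  have h2 := hq N
  have e1 : 1 ≤ Real.exp (((N : ℝ) + 2) ^ p) := Real.one_le_exp (by positivity)
  have e2 : 1 ≤ Real.exp (((N : ℝ) + 2) ^ q) := Real.one_le_exp (by positivity)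
  refine (abs_add_le _ _).trans ?_
  rw [abs_of_nonneg (a := 2 * _) (by positivity)]
  nlinarith

end Moderate

/-! ### Extraction of Taylor coefficients under the integral sign -/

/-- Loss factor of coefficient extraction from values at `0, h, …, d h`, for polynomials of degree at
most `d`. -/
def Qc (d : ℕ) : ℝ := (d + 1 : ℝ) ^ (d + 2)

lemma one_le_Qc (d : ℕ) : 1 ≤ Qc d :=
  one_le_pow₀ (by linarith [(Nat.cast_nonneg d : (0:ℝ) ≤ d)])

lemma abs_integral_mul_le {α : Type*} [MeasurableSpace α] {ν : Measure α} {g φ : α → ℝ} {e : ℝ}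
    (hg : Integrable g ν) (h : ∀ᵐ y ∂ν, |φ y| ≤ e) : |∫ y, g y * φ y ∂ν| ≤ e * ∫ y, |g y| ∂ν := by
  rw [← integral_const_mul, ← Real.norm_eq_abs]
  refine norm_integral_le_of_norm_le (hg.abs.const_mul e) ?_
  filter_upwards [h] with y hy
  rw [Real.norm_eq_abs, abs_mul, mul_comm]
  gcongr

open Polynomial in
/-- If the values at `s = 0, h, …, d h` of `f s y` are close to those of a polynomial `P y` in `s`,
then the moment of `g` against a coefficient of `P` is controlled by the moments against
`f (i h)`. -/
lemma extraction {α : Type*} [MeasurableSpace α] {ν : Measure α} {g : α → ℝ}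
    (hg : Integrable g ν) (f : ℝ → α → ℝ) (P : α → ℝ[X]) (d k : ℕ) {h e S : ℝ} (hh : 0 < h)
    (hdeg : ∀ᵐ y ∂ν, (P y).natDegree ≤ d)
    (happ : ∀ i ≤ d, ∀ᵐ y ∂ν, |f (i * h) y - (P y).eval (i * h)| ≤ e)
    (hInt : ∀ i ≤ d, Integrable (fun y => g y * f (i * h) y) ν)
    (hcoef : Integrable (fun y => g y * (P y).coeff k) ν)
    (hS : ∀ i ≤ d, |∫ y, g y * f (i * h) y ∂ν| ≤ S) :
    h ^ k * |∫ y, g y * (P y).coeff k ∂ν| ≤ Qc d * (S + e * ∫ y, |g y| ∂ν) := by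
  obtain ⟨q, hq, hqP⟩ := exists_coeff_functional d k
  have hi : ∀ i ∈ Finset.range (d + 1), i ≤ d := fun i hi => by
    have := Finset.mem_range.1 hi; omega
  have key : ∀ᵐ y ∂ν, |h ^ k * (P y).coeff k - ∑ i ∈ Finset.range (d + 1), q i * f (i * h) y| ≤
      Qc d * e := by
    have hall : ∀ᵐ y ∂ν, ∀ i ∈ Finset.range (d + 1), |f (i * h) y - (P y).eval (i * h)| ≤ e :=
      (Finset.eventually_all _).2 fun i h' => happ i (hi i h')
    filter_upwards [hdeg, hall] with y hy hy'
    have h1 := hqP ((P y).comp (C h * X)) (by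
      refine natDegree_comp_le.trans ?_
      calc _ ≤ (P y).natDegree * 1 := by gcongr; compute_degree
        _ ≤ d := by simpa using hy)
    rw [comp_C_mul_X_coeff] at h1
    rw [mul_comm, h1, ← Finset.sum_sub_distrib]
    refine (Finset.abs_sum_le_sum_abs _ _).trans ?_
    calc _ ≤ ∑ i ∈ Finset.range (d + 1), (d + 1 : ℝ) ^ (d + 1) * e := by
          refine Finset.sum_le_sum fun i hi' => ?_
          rw [← mul_sub, abs_mul]
          gcongr
          · exact hq i
          · have := hy' i hi'
            rw [abs_sub_comm, mul_comm (i : ℝ) h] at this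
            simp only [eval_comp, eval_mul, eval_C, eval_X]
            rwa [mul_comm (i : ℝ) h]
      _ = _ := by
          rw [Finset.sum_const, Finset.card_range, Qc, nsmul_eq_mul]; push_cast; ring
  have h2 := abs_integral_mul_le hg key
  have hint2 : Integrable (fun y => ∑ i ∈ Finset.range (d + 1), q i * (g y * f (i * h) y)) ν :=
    integrable_finsetSum _ fun i h' => (hInt i (hi i h')).const_mul _
  have h3 : ∫ y, g y * (h ^ k * (P y).coeff k - ∑ i ∈ Finset.range (d + 1), q i * f (i * h) y) ∂ν
      = h ^ k * (∫ y, g y * (P y).coeff k ∂ν) -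
        ∑ i ∈ Finset.range (d + 1), q i * ∫ y, g y * f (i * h) y ∂ν := by
    rw [← integral_const_mul]
    simp_rw [← integral_const_mul]
    rw [← integral_finsetSum _ fun i h' => (hInt i (hi i h')).const_mul _,
      ← integral_sub (hcoef.const_mul _) hint2]
    refine integral_congr_ae (Filter.Eventually.of_forall fun y => ?_)
    dsimp only
    rw [mul_sub, Finset.mul_sum]
    congr 1
    · ring
    · exact Finset.sum_congr rfl fun i _ => by ring
  rw [h3] at h2
  have h4 : |∑ i ∈ Finset.range (d + 1), q i * ∫ y, g y * f (i * h) y ∂ν| ≤ Qc d * S := by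
    refine (Finset.abs_sum_le_sum_abs _ _).trans ?_
    calc _ ≤ ∑ i ∈ Finset.range (d + 1), (d + 1 : ℝ) ^ (d + 1) * S := by
          refine Finset.sum_le_sum fun i hi' => ?_
          rw [abs_mul]
          gcongr
          · exact hq i
          · exact hS i (hi i hi')
      _ = _ := by
          rw [Finset.sum_const, Finset.card_range, Qc, nsmul_eq_mul]; push_cast; ring
  have h5 : h ^ k * |∫ y, g y * (P y).coeff k ∂ν| = |h ^ k * ∫ y, g y * (P y).coeff k ∂ν| := by
    rw [abs_mul, abs_of_pos (pow_pos hh k)]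
  rw [h5]
  have h6 := abs_sub_abs_le_abs_sub (h ^ k * ∫ y, g y * (P y).coeff k ∂ν)
    (∑ i ∈ Finset.range (d + 1), q i * ∫ y, g y * f (i * h) y ∂ν)
  linarith

open Polynomial in
/-- Truncated binomial expansion in `s` of `(D + a s + b s²)^(-μ)`. -/
noncomputable def kpoly (μ : ℝ) (J : ℕ) (D a b : ℝ) : ℝ[X] :=
  C (D ^ (-μ)) * ∑ j ∈ Finset.range J, C (cc μ j) * (X * (-(C (a / D) + C (b / D) * X))) ^ j

open Polynomial in
lemma kpoly_natDegree (μ : ℝ) (J : ℕ) (D a b : ℝ) : (kpoly μ J D a b).natDegree ≤ 2 * J := by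
  refine (natDegree_C_mul_le _ _).trans (natDegree_sum_le_of_forall_le _ _ fun j hj => ?_)
  refine (natDegree_C_mul_le _ _).trans (natDegree_pow_le.trans ?_)
  have hj' := Finset.mem_range.1 hj
  have : (X * (-(C (a / D) + C (b / D) * X))).natDegree ≤ 2 := by compute_degree
  calc _ ≤ j * 2 := by gcongr
    _ ≤ _ := by omega

open Polynomial in
/-- Error of the truncated expansion for a small step `s`. The bound `L s` on the relative increment is
kept linear in `s`, so that the error has order `s ^ J`. -/
lemma kpoly_error {μ : ℝ} (hμ : 0 < μ) (J : ℕ) {D a b s L : ℝ} (hD : 0 < D)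
    (hL : 2 * |a * s + b * s ^ 2| ≤ D * (L * s)) (hLs : L * s ≤ 1) :
    |(D + a * s + b * s ^ 2) ^ (-μ) - (kpoly μ J D a b).eval s| ≤
      (2 / D) ^ μ * (L * s) ^ J := by
  set u := -((a * s + b * s ^ 2) / D) with hu
  have hau : 2 * |u| ≤ L * s := by
    rw [hu, abs_neg, abs_div, abs_of_pos hD, mul_div_assoc', div_le_iff₀ hD]; linarith
  have h1 : D + a * s + b * s ^ 2 = D * (1 - u) := by rw [hu]; field_simp; ring
  have hu1 : |u| ≤ 1 / 2 := by linarith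
  have h2 : (kpoly μ J D a b).eval s = D ^ (-μ) * ∑ j ∈ Finset.range J, cc μ j * u ^ j := by
    simp only [kpoly, eval_mul, eval_C, eval_finsetSum, eval_pow, eval_X, eval_neg, eval_add]
    congr 1
    refine Finset.sum_congr rfl fun j _ => ?_
    congr 2
    rw [hu]; ring
  rw [h1, Real.mul_rpow hD.le (by linarith [(abs_le.1 hu1).2]), h2, ← mul_sub, abs_mul,
    abs_of_pos (Real.rpow_pos_of_pos hD _), Real.div_rpow (by norm_num) hD.le,
    Real.rpow_neg hD.le, div_eq_inv_mul, mul_assoc]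
  gcongr
  refine (cc_remainder hμ hu1 J).trans ?_
  gcongr

open Polynomial in
lemma kpoly_coeffs (μ : ℝ) (J : ℕ) (D a b : ℝ) :
    (kpoly μ (J + 3) D a b).coeff 0 = D ^ (-μ) ∧
    (kpoly μ (J + 3) D a b).coeff 1 = D ^ (-μ) * (-μ * (a / D)) ∧
    (kpoly μ (J + 3) D a b).coeff 2 =
      D ^ (-μ) * (-μ * (b / D) + μ * (μ + 1) / 2 * (a / D) ^ 2) := by
  set w : ℝ[X] := -(C (a / D) + C (b / D) * X) with hw
  have key : ∀ k ≤ 2, (kpoly μ (J + 3) D a b).coeff k =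
      D ^ (-μ) * ∑ j ∈ Finset.range 3, cc μ j * ((X * w) ^ j).coeff k := by
    intro k hk
    rw [kpoly, coeff_C_mul, finsetSum_coeff]
    simp only [coeff_C_mul]
    congr 1
    symm
    apply Finset.sum_subset (by intro x; simp only [Finset.mem_range]; omega)
    intro j hj hj'
    simp only [Finset.mem_range] at hj hj'
    rw [mul_pow, coeff_X_pow_mul', if_neg (by omega), mul_zero]
  have c0 : cc μ 0 = 1 := by simp [cc]
  have c1 : cc μ 1 = μ := by simp [cc]
  have c2 : cc μ 2 = μ * (μ + 1) / 2 := by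
    simp only [cc, Finset.prod_range_succ, Finset.prod_range_zero]; push_cast; ring
  have hw0 : w.coeff 0 = -(a / D) := by simp [hw]
  have hw1 : w.coeff 1 = -(b / D) := by simp [hw]
  refine ⟨?_, ?_, ?_⟩
  · rw [key 0 (by norm_num)]
    simp [c0, mul_pow]
  · rw [key 1 (by norm_num)]
    simp [Finset.sum_range_succ, c0, c1, mul_pow, coeff_X_pow_mul', coeff_one, hw0]
  · rw [key 2 (by norm_num)]
    simp [Finset.sum_range_succ, c0, c1, c2, mul_pow, coeff_X_pow_mul', coeff_one]
    left
    rw [hw1, pow_two w, mul_coeff_zero, hw0]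
    ring

/-! ### Divergence and Laplacian of the kernels from finitely many values -/

/-- The closed ball `B(x₀, r)` and the set `Ω` are at mutual distances between `d` and `R`,
with the normalisations `r, d ≤ 1 ≤ R`. -/
structure Geo {n : ℕ} (Ω : Set (EuclideanSpace ℝ (Fin n))) (x₀ : EuclideanSpace ℝ (Fin n))
    (r d R : ℝ) : Prop where
  meas : MeasurableSet Ω
  r_pos : 0 < r
  r_le : r ≤ 1
  d_pos : 0 < d
  d_le : d ≤ 1
  R_ge : 1 ≤ R
  lower : ∀ x ∈ Metric.closedBall x₀ r, ∀ y ∈ Ω, d ≤ ‖x - y‖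
  upper : ∀ x ∈ Metric.closedBall x₀ r, ∀ y ∈ Ω, ‖x - y‖ ≤ R

namespace Geo

variable {n : ℕ} {Ω : Set (EuclideanSpace ℝ (Fin n))} {x₀ : EuclideanSpace ℝ (Fin n)} {r d R : ℝ}

lemma ae (G : Geo Ω x₀ r d R) {p : EuclideanSpace ℝ (Fin n) → Prop} (h : ∀ y ∈ Ω, p y) :
    ∀ᵐ y ∂(volume.restrict Ω), p y := (ae_restrict_iff' G.meas).2 (Filter.Eventually.of_forall h)

lemma sq_lower (G : Geo Ω x₀ r d R) {x} (hx : x ∈ Metric.closedBall x₀ r) {y} (hy : y ∈ Ω) :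
    d ^ 2 ≤ ‖x - y‖ ^ 2 := pow_le_pow_left₀ G.d_pos.le (G.lower x hx y hy) 2

lemma sq_pos (G : Geo Ω x₀ r d R) {x} (hx : x ∈ Metric.closedBall x₀ r) {y} (hy : y ∈ Ω) :
    0 < ‖x - y‖ ^ 2 := (pow_pos G.d_pos 2).trans_le (G.sq_lower hx hy)

lemma rpow_le (G : Geo Ω x₀ r d R) {x} (hx : x ∈ Metric.closedBall x₀ r) {y} (hy : y ∈ Ω)
    {μ : ℝ} (hμ : 0 ≤ μ) : (2 / ‖x - y‖ ^ 2) ^ μ ≤ (2 / d ^ 2) ^ μ := by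
  have := G.sq_lower hx hy
  have := G.d_pos
  gcongr

lemma rpow_neg_le (G : Geo Ω x₀ r d R) {x} (hx : x ∈ Metric.closedBall x₀ r) {y} (hy : y ∈ Ω)
    {μ : ℝ} (hμ : 0 ≤ μ) : (‖x - y‖ ^ 2) ^ (-μ) ≤ (2 / d ^ 2) ^ μ := by
  refine le_trans ?_ (G.rpow_le hx hy hμ)
  have hp := G.sq_pos hx hy
  rw [Real.rpow_neg hp.le, ← Real.inv_rpow hp.le, inv_eq_one_div]
  gcongr
  norm_num

lemma int_rpow (G : Geo Ω x₀ r d R) {g : EuclideanSpace ℝ (Fin n) → ℝ}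
    (hg : Integrable g (volume.restrict Ω)) {x} (hx : x ∈ Metric.closedBall x₀ r)
    {μ : ℝ} (hμ : 0 ≤ μ) :
    Integrable (fun y => g y * (‖x - y‖ ^ 2) ^ (-μ)) (volume.restrict Ω) := by
  refine hg.mul_bdd (c := (2 / d ^ 2) ^ μ) ?_ (G.ae fun y hy => ?_)
  · exact (Measurable.pow_const (by fun_prop) _).aestronglyMeasurable
  · rw [Real.norm_of_nonneg (by positivity)]
    exact G.rpow_neg_le hx hy hμ

lemma coord_le (G : Geo Ω x₀ r d R) {x} (hx : x ∈ Metric.closedBall x₀ r) {y} (hy : y ∈ Ω)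
    (j : Fin n) : |x j - y j| ≤ R := by
  have := PiLp.norm_apply_le (x - y) j
  simp only [PiLp.sub_apply, Real.norm_eq_abs] at this
  exact this.trans (G.upper x hx y hy)

lemma int_mul_coord (G : Geo Ω x₀ r d R) {f : EuclideanSpace ℝ (Fin n) → ℝ}
    (hf : Integrable f (volume.restrict Ω)) {x} (hx : x ∈ Metric.closedBall x₀ r) (j : Fin n) :
    Integrable (fun y => f y * (x j - y j)) (volume.restrict Ω) := by
  refine hf.mul_bdd (c := R) ?_ (G.ae fun y hy => ?_)
  · exact Measurable.aestronglyMeasurable (by fun_prop)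
  · exact G.coord_le hx hy j

end Geo

section shift
variable {n : ℕ}

lemma norm_shift (x y : EuclideanSpace ℝ (Fin n)) (j : Fin n) (s : ℝ) :
    ‖x + EuclideanSpace.single j s - y‖ ^ 2 = ‖x - y‖ ^ 2 + 2 * (x j - y j) * s + 1 * s ^ 2 := by
  have : x + EuclideanSpace.single j s - y = (x - y) + EuclideanSpace.single j s := by abel
  rw [this, @norm_add_sq_real, EuclideanSpace.inner_single_right, PiLp.norm_single]
  simp
  ring

lemma sum_coord_sq (x y : EuclideanSpace ℝ (Fin n)) :
    ∑ j, (x j - y j) ^ 2 = ‖x - y‖ ^ 2 := by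
  rw [EuclideanSpace.norm_sq_eq]
  simp

variable {Ω : Set (EuclideanSpace ℝ (Fin n))} {x₀ : EuclideanSpace ℝ (Fin n)} {r d R : ℝ}

lemma Geo.u_bound (G : Geo Ω x₀ r d R) {x} (hx : x ∈ Metric.closedBall x₀ r) {y} (hy : y ∈ Ω)
    (j : Fin n) {s : ℝ} (hs : 0 ≤ s) (hs1 : s ≤ 1) :
    2 * |2 * (x j - y j) * s + 1 * s ^ 2| ≤ ‖x - y‖ ^ 2 * (6 * R / d ^ 2 * s) := by
  have h1 := G.coord_le hx hy j
  have h2 := G.sq_lower hx hy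
  have hd := G.d_pos
  have hR := G.R_ge
  calc _ ≤ 2 * (2 * R * s + R * s) := by
        gcongr
        refine (abs_add_le _ _).trans ?_
        rw [abs_mul, abs_mul, abs_of_nonneg hs, abs_of_nonneg (by positivity : (0:ℝ) ≤ 1 * s ^ 2)]
        simp only [Nat.abs_ofNat]
        gcongr
        nlinarith
    _ = d ^ 2 * (6 * R / d ^ 2 * s) := by field_simp; ring
    _ ≤ _ := by gcongr

lemma Geo.shift_mem {x : EuclideanSpace ℝ (Fin n)} {j : Fin n} {s ρ : ℝ} (hs : 0 ≤ s) (hρ : s ≤ ρ) :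
    x + EuclideanSpace.single j s ∈ Metric.closedBall x ρ := by
  rw [Metric.mem_closedBall, dist_eq_norm, add_sub_cancel_left, PiLp.norm_single,
    Real.norm_of_nonneg hs]
  exact hρ

/-- Admissibility of the steps `i h` used in the extraction of a coefficient from `2 J + 2` values. -/
lemma Geo.s_facts (G : Geo Ω x₀ r d R) {J i : ℕ} {h : ℝ} (hh : 0 < h)
    (hL : 6 * R / d ^ 2 * ((2 * J + 1) * h) ≤ 1) (hi : i ≤ 2 * J + 1) :
    0 ≤ i * h ∧ i * h ≤ (2 * J + 1) * h ∧ i * h ≤ 1 ∧ 6 * R / d ^ 2 * (i * h) ≤ 1 := by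
  have hd := G.d_pos
  have hR := G.R_ge
  have h1 : i * h ≤ (2 * J + 1) * h := by
    gcongr; exact_mod_cast hi
  have h2 : 1 ≤ 6 * R / d ^ 2 := by
    rw [one_le_div (by positivity)]
    have : d ^ 2 ≤ 1 := pow_le_one₀ hd.le G.d_le
    linarith
  have h0 : 0 ≤ i * h := by positivity
  have h3 : 6 * R / d ^ 2 * (i * h) ≤ 1 := le_trans (by gcongr) hL
  exact ⟨h0, h1, by nlinarith, h3⟩

/-- Extraction of the Laplacian: moments against `|x-y|^(-2μ)` near `x` control the moment against
`|x-y|^(-2μ-2)`. The second order coefficients of `s ↦ |x + s e_j - y|^(-2μ)`, summed over `j`, give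
half of the Laplacian, which is `μ (2μ + 2 - n) |x-y|^(-2μ-2)`. -/
lemma Geo.step (G : Geo Ω x₀ r d R) {g : EuclideanSpace ℝ (Fin n) → ℝ}
    (hg : Integrable g (volume.restrict Ω)) {μ h S : ℝ} (hμ : 0 < μ) {J : ℕ} (hJ : 3 ≤ J)
    (hh : 0 < h) (hL : 6 * R / d ^ 2 * ((2 * J + 1) * h) ≤ 1) {x : EuclideanSpace ℝ (Fin n)}
    (hx : Metric.closedBall x ((2 * J + 1) * h) ⊆ Metric.closedBall x₀ r)
    (hS : ∀ x' ∈ Metric.closedBall x ((2 * J + 1) * h),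
      |∫ y in Ω, g y * (‖x' - y‖ ^ 2) ^ (-μ)| ≤ S) :
    h ^ 2 * |μ * (2 * μ + 2 - n) * ∫ y in Ω, g y * (‖x - y‖ ^ 2) ^ (-(μ + 1))| ≤
      n * (Qc (2 * J + 1) * (S + (2 / d ^ 2) ^ μ * (6 * R / d ^ 2 * ((2 * J + 1) * h)) ^ J *
        ∫ y in Ω, |g y|)) := by
  obtain ⟨J, rfl⟩ : ∃ J', J = J' + 3 := ⟨J - 3, by omega⟩
  have hd := G.d_pos
  have hR := G.R_ge
  have hxx : x ∈ Metric.closedBall x₀ r := hx (Metric.mem_closedBall_self (by positivity))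
  -- the second order coefficient in direction `j`
  set c : Fin n → EuclideanSpace ℝ (Fin n) → ℝ := fun j y =>
    (kpoly μ (J + 3) (‖x - y‖ ^ 2) (2 * (x j - y j)) 1).coeff 2 with hc
  have hce : ∀ j, ∀ y ∈ Ω, g y * c j y = -μ * (g y * (‖x - y‖ ^ 2) ^ (-(μ + 1))) +
      2 * μ * (μ + 1) * (g y * (‖x - y‖ ^ 2) ^ (-(μ + 2)) * (x j - y j) * (x j - y j)) := by
    intro j y hy
    have hp := G.sq_pos hxx hy
    simp only [hc]
    rw [(kpoly_coeffs _ _ _ _ _).2.2, show -(μ + 2) = -μ - (2 : ℕ) by push_cast; ring,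
      Real.rpow_sub_natCast hp.ne', show -(μ + 1) = -μ - 1 by ring, Real.rpow_sub_one hp.ne']
    field_simp
  have hci : ∀ j, Integrable (fun y => g y * c j y) (volume.restrict Ω) := by
    intro j
    refine Integrable.congr ?_ (G.ae fun y hy => (hce j y hy).symm)
    refine ((G.int_rpow hg hxx (by positivity)).const_mul _).add (Integrable.const_mul ?_ _)
    exact G.int_mul_coord (G.int_mul_coord (G.int_rpow hg hxx (by positivity)) hxx j) hxx j
  have hsum : ∑ j, ∫ y in Ω, g y * c j y =
      μ * (2 * μ + 2 - n) * ∫ y in Ω, g y * (‖x - y‖ ^ 2) ^ (-(μ + 1)) := by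
    rw [← integral_finsetSum _ fun j _ => hci j, ← integral_const_mul]
    refine integral_congr_ae (G.ae fun y hy => ?_)
    have hp := G.sq_pos hxx hy
    have hq : ‖x - y‖ ≠ 0 := fun h0 => by rw [h0] at hp; norm_num at hp
    dsimp only
    rw [Finset.sum_congr rfl fun j _ => hce j y hy, Finset.sum_add_distrib, ← Finset.mul_sum]
    simp only [mul_assoc, ← Finset.mul_sum, ← pow_two, sum_coord_sq]
    rw [Finset.sum_const, Finset.card_univ, Fintype.card_fin, nsmul_eq_mul,
      show -(μ + 2) = -(μ + 1) - 1 by ring, Real.rpow_sub_one hp.ne']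
    field_simp
    ring
  rw [← hsum]
  have hj : ∀ j, h ^ 2 * |∫ y in Ω, g y * c j y| ≤ Qc (2 * (J + 3) + 1) *
      (S + (2 / d ^ 2) ^ μ * (6 * R / d ^ 2 * ((2 * ((J + 3 : ℕ) : ℝ) + 1) * h)) ^ (J + 3) *
        ∫ y in Ω, |g y|) := by
    intro j
    refine extraction hg (fun s y => (‖x + EuclideanSpace.single j s - y‖ ^ 2) ^ (-μ))
      (fun y => kpoly μ (J + 3) (‖x - y‖ ^ 2) (2 * (x j - y j)) 1) (2 * (J + 3) + 1) 2 hh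
      ?_ ?_ ?_ (hci j) ?_
    · exact Filter.Eventually.of_forall fun y => (kpoly_natDegree _ _ _ _ _).trans (by omega)
    · intro i hi
      obtain ⟨h0, h1, h2, h3⟩ := G.s_facts hh hL hi
      refine G.ae fun y hy => ?_
      have hp := G.sq_pos hxx hy
      dsimp only
      rw [norm_shift]
      refine (kpoly_error hμ (J + 3) hp (G.u_bound hxx hy j h0 h2) h3).trans ?_
      have := G.rpow_le hxx hy hμ.le
      gcongr
    · intro i hi
      obtain ⟨h0, h1, h2, h3⟩ := G.s_facts hh hL hi
      exact G.int_rpow hg (hx (Geo.shift_mem h0 h1)) hμ.le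
    · intro i hi
      obtain ⟨h0, h1, h2, h3⟩ := G.s_facts hh hL hi
      exact hS _ (Geo.shift_mem h0 h1)
  calc _ ≤ h ^ 2 * ∑ j, |∫ y in Ω, g y * c j y| := by
        gcongr; exact Finset.abs_sum_le_sum_abs _ _
    _ = ∑ j, h ^ 2 * |∫ y in Ω, g y * c j y| := Finset.mul_sum _ _ _
    _ ≤ ∑ _j : Fin n, _ := Finset.sum_le_sum fun j _ => hj j
    _ = _ := by rw [Finset.sum_const, Finset.card_univ, Fintype.card_fin, nsmul_eq_mul]

open Polynomial in
/-- Extraction of the divergence: the Riesz kernels near `x` control `|x-y|^(-n-1)`.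
The kernel `(x_j - y_j) |x-y|^(-2μ)` with `2μ = n + 1` has divergence `-|x-y|^(-2μ)`. -/
lemma Geo.base (G : Geo Ω x₀ r d R) {g : EuclideanSpace ℝ (Fin n) → ℝ}
    (hg : Integrable g (volume.restrict Ω)) {μ h S : ℝ} (hμ : 0 < μ) (hμn : 2 * μ = n + 1) {J : ℕ}
    (hJ : 3 ≤ J)
    (hh : 0 < h) (hL : 6 * R / d ^ 2 * ((2 * J + 1) * h) ≤ 1) {x : EuclideanSpace ℝ (Fin n)}
    (hx : Metric.closedBall x ((2 * J + 1) * h) ⊆ Metric.closedBall x₀ r)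
    (hS : ∀ j, ∀ x' ∈ Metric.closedBall x ((2 * J + 1) * h),
      |∫ y in Ω, g y * ((‖x' - y‖ ^ 2) ^ (-μ) * (x' j - y j))| ≤ S) :
    h * |∫ y in Ω, g y * (‖x - y‖ ^ 2) ^ (-μ)| ≤
      n * (Qc (2 * J + 1) * (S + 2 * R * ((2 / d ^ 2) ^ μ *
        (6 * R / d ^ 2 * ((2 * J + 1) * h)) ^ J) * ∫ y in Ω, |g y|)) := by
  obtain ⟨J, rfl⟩ : ∃ J', J = J' + 3 := ⟨J - 3, by omega⟩
  have hd := G.d_pos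
  have hR := G.R_ge
  have hxx : x ∈ Metric.closedBall x₀ r := hx (Metric.mem_closedBall_self (by positivity))
  set P : Fin n → EuclideanSpace ℝ (Fin n) → ℝ[X] := fun j y =>
    kpoly μ (J + 3) (‖x - y‖ ^ 2) (2 * (x j - y j)) 1 * (X + C (x j - y j)) with hP
  set c : Fin n → EuclideanSpace ℝ (Fin n) → ℝ := fun j y => (P j y).coeff 1 with hc
  have hce : ∀ j, ∀ y ∈ Ω, g y * c j y = (g y * (‖x - y‖ ^ 2) ^ (-μ)) +
      -(2 * μ) * (g y * (‖x - y‖ ^ 2) ^ (-(μ + 1)) * (x j - y j) * (x j - y j)) := by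
    intro j y hy
    have hp := G.sq_pos hxx hy
    simp only [hc, hP]
    rw [mul_add, coeff_add, coeff_mul_C, coeff_mul_X, (kpoly_coeffs _ _ _ _ _).1,
      (kpoly_coeffs _ _ _ _ _).2.1,
      show -(μ + 1) = -μ - 1 by ring, Real.rpow_sub_one hp.ne']
    field_simp
  have hci : ∀ j, Integrable (fun y => g y * c j y) (volume.restrict Ω) := by
    intro j
    refine Integrable.congr ?_ (G.ae fun y hy => (hce j y hy).symm)
    refine (G.int_rpow hg hxx (by positivity)).add (Integrable.const_mul ?_ _)
    exact G.int_mul_coord (G.int_mul_coord (G.int_rpow hg hxx (by positivity)) hxx j) hxx j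
  have hsum : ∑ j, ∫ y in Ω, g y * c j y =
      (-1) * ∫ y in Ω, g y * (‖x - y‖ ^ 2) ^ (-μ) := by
    rw [← integral_finsetSum _ fun j _ => hci j, ← integral_const_mul]
    refine integral_congr_ae (G.ae fun y hy => ?_)
    have hp := G.sq_pos hxx hy
    have hq : ‖x - y‖ ≠ 0 := fun h0 => by rw [h0] at hp; norm_num at hp
    dsimp only
    rw [Finset.sum_congr rfl fun j _ => hce j y hy, Finset.sum_add_distrib, ← Finset.mul_sum]
    simp only [mul_assoc, ← Finset.mul_sum, ← pow_two, sum_coord_sq]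
    rw [Finset.sum_const, Finset.card_univ, Fintype.card_fin, nsmul_eq_mul,
      show -(μ + 1) = -μ - 1 by ring, Real.rpow_sub_one hp.ne']
    field_simp
    linear_combination (-g y) * hμn
  have hneg : |∫ y in Ω, g y * (‖x - y‖ ^ 2) ^ (-μ)| = |∑ j, ∫ y in Ω, g y * c j y| := by
    rw [hsum]; simp
  rw [hneg]
  have hj : ∀ j, h ^ 1 * |∫ y in Ω, g y * c j y| ≤ Qc (2 * (J + 3) + 1) *
      (S + 2 * R * ((2 / d ^ 2) ^ μ *
        (6 * R / d ^ 2 * ((2 * ((J + 3 : ℕ) : ℝ) + 1) * h)) ^ (J + 3)) * ∫ y in Ω, |g y|) := by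
    intro j
    refine extraction hg (fun s y => (‖x + EuclideanSpace.single j s - y‖ ^ 2) ^ (-μ) *
        ((x + EuclideanSpace.single j s) j - y j))
      (P j) (2 * (J + 3) + 1) 1 hh
      ?_ ?_ ?_ (hci j) ?_
    · refine Filter.Eventually.of_forall fun y => natDegree_mul_le.trans ?_
      exact add_le_add (kpoly_natDegree _ _ _ _ _) (natDegree_X_add_C _).le
    · intro i hi
      obtain ⟨h0, h1, h2, h3⟩ := G.s_facts hh hL hi
      refine G.ae fun y hy => ?_
      have hp := G.sq_pos hxx hy
      have hco := G.coord_le hxx hy j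
      dsimp only [hP]
      rw [norm_shift, eval_mul, eval_add, eval_X, eval_C]
      have e1 : (x + EuclideanSpace.single j (i * h)) j - y j = i * h + (x j - y j) := by
        simp; ring
      rw [e1, ← sub_mul, abs_mul, mul_comm]
      have e2 : |i * h + (x j - y j)| ≤ 2 * R := by
        refine (abs_add_le _ _).trans ?_
        rw [abs_of_nonneg h0]; linarith
      have := kpoly_error hμ (J + 3) hp (G.u_bound hxx hy j h0 h2) h3
      have := G.rpow_le hxx hy hμ.le
      gcongr
      refine (kpoly_error hμ (J + 3) hp (G.u_bound hxx hy j h0 h2) h3).trans ?_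
      gcongr
    · intro i hi
      obtain ⟨h0, h1, h2, h3⟩ := G.s_facts hh hL hi
      simp only [← mul_assoc]
      exact G.int_mul_coord (G.int_rpow hg (hx (Geo.shift_mem h0 h1)) hμ.le)
        (hx (Geo.shift_mem h0 h1)) j
    · intro i hi
      obtain ⟨h0, h1, h2, h3⟩ := G.s_facts hh hL hi
      exact hS j _ (Geo.shift_mem h0 h1)
  rw [pow_one] at hj
  calc _ ≤ h * ∑ j, |∫ y in Ω, g y * c j y| := by
        gcongr; exact Finset.abs_sum_le_sum_abs _ _
    _ = ∑ j, h * |∫ y in Ω, g y * c j y| := Finset.mul_sum _ _ _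
    _ ≤ ∑ _j : Fin n, _ := Finset.sum_le_sum fun j _ => hj j
    _ = _ := by rw [Finset.sum_const, Finset.card_univ, Fintype.card_fin, nsmul_eq_mul]

end shift

/-! ### Iterated Laplacians and expansion along lines -/

section moments
variable {n : ℕ} {Ω : Set (EuclideanSpace ℝ (Fin n))} {x₀ : EuclideanSpace ℝ (Fin n)} {r d R : ℝ}

lemma Geo.one_le_A (G : Geo Ω x₀ r d R) : 1 ≤ 2 / d ^ 2 := by
  have := G.d_pos
  rw [one_le_div (by positivity)]
  linarith [pow_le_one₀ (n := 2) G.d_pos.le G.d_le]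

lemma Geo.one_le_L (G : Geo Ω x₀ r d R) : 1 ≤ 6 * R / d ^ 2 := by
  have := G.d_pos
  rw [one_le_div (by positivity)]
  linarith [pow_le_one₀ (n := 2) G.d_pos.le G.d_le, G.R_ge]

/-- Error constant in the iterated Laplacian extraction. -/
noncomputable def Ebig (n : ℕ) (d R : ℝ) (Mx J : ℕ) : ℝ :=
  2 * R * (2 / d ^ 2) ^ (((n : ℝ) + 1) / 2 + Mx) * (6 * R / d ^ 2 * (2 * J + 1)) ^ J

lemma Geo.one_le_Ebig (G : Geo Ω x₀ r d R) (Mx J : ℕ) : 1 ≤ Ebig n d R Mx J := by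
  unfold Ebig
  have h1 : 1 ≤ (2 / d ^ 2) ^ (((n : ℝ) + 1) / 2 + Mx) :=
    Real.one_le_rpow G.one_le_A (by positivity)
  have h2 : (1 : ℝ) ≤ 2 * J + 1 := by linarith [(Nat.cast_nonneg J : (0:ℝ) ≤ J)]
  have h3 : 1 ≤ (6 * R / d ^ 2 * (2 * J + 1)) ^ J :=
    one_le_pow₀ (one_le_mul_of_one_le_of_one_le G.one_le_L h2)
  have h4 : 1 ≤ 2 * R := by linarith [G.R_ge]
  exact one_le_mul_of_one_le_of_one_le (one_le_mul_of_one_le_of_one_le h4 h1) h3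

/-- Iterating the Laplacian: smallness of the Riesz transforms on `B(x₀, r/2)` gives smallness of
the moments against `|x-y|^(-n-1-2m)`. Each step divides by `h²`, multiplies the constant and shrinks the
admissible ball by `(2J+1) h`; no factor `μ (2μ + 2 - n)` vanishes because `2μ ≥ n + 1`. -/
lemma Geo.laplace_iter (G : Geo Ω x₀ r d R) (hn : 1 ≤ n) {g : EuclideanSpace ℝ (Fin n) → ℝ}
    (hg : Integrable g (volume.restrict Ω)) {h η : ℝ} {Mx J : ℕ} (hJ : 3 ≤ J)
    (hh : 0 < h) (hL : 6 * R / d ^ 2 * ((2 * J + 1) * h) ≤ 1)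
    (hη : ∀ j, ∀ x ∈ Metric.closedBall x₀ (r / 2),
      |∫ y in Ω, g y * ((‖x - y‖ ^ 2) ^ (-(((n : ℝ) + 1) / 2)) * (x j - y j))| ≤ η)
    (m : ℕ) (hm : m ≤ Mx) (x) (hx : dist x x₀ + (m + 1) * ((2 * J + 1) * h) ≤ r / 2) :
    h ^ (2 * m + 1) * |∫ y in Ω, g y * (‖x - y‖ ^ 2) ^ (-(((n : ℝ) + 1) / 2 + m))| ≤
      (2 * n * Qc (2 * J + 1) * Ebig n d R Mx J) ^ (m + 1) * (η + h ^ J * ∫ y in Ω, |g y|) := by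
  set Q := Qc (2 * J + 1)
  set M₁ := ∫ y in Ω, |g y|
  set E := Ebig n d R Mx J with hE
  set T := (2 * J + 1) * h with hT
  have hQ : 1 ≤ Q := one_le_Qc _
  have hE1 : 1 ≤ E := G.one_le_Ebig _ _
  have hM : 0 ≤ M₁ := integral_nonneg fun _ => abs_nonneg _
  have hn' : (1 : ℝ) ≤ n := by exact_mod_cast hn
  have hd := G.d_pos
  have hR := G.R_ge
  have hr := G.r_pos
  have hT0 : 0 < T := by positivity
  have hη0 : 0 ≤ η := (abs_nonneg _).trans
    (hη ⟨0, hn⟩ x₀ (Metric.mem_closedBall_self (by positivity)))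
  have hh1 : h ≤ 1 := by
    have h1 : (1 : ℝ) ≤ 2 * J + 1 := by linarith [(Nat.cast_nonneg J : (0:ℝ) ≤ J)]
    have : h ≤ T := by rw [hT]; nlinarith
    have := G.one_le_L
    nlinarith
  have hEm : ∀ m ≤ Mx, 2 * R * ((2 / d ^ 2) ^ (((n : ℝ) + 1) / 2 + m) * (6 * R / d ^ 2 * T) ^ J)
      ≤ E * h ^ J := by
    intro m hm
    have : (2 / d ^ 2) ^ (((n : ℝ) + 1) / 2 + m) ≤ (2 / d ^ 2) ^ (((n : ℝ) + 1) / 2 + Mx) :=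
      Real.rpow_le_rpow_of_exponent_le G.one_le_A (by gcongr)
    calc _ ≤ 2 * R * ((2 / d ^ 2) ^ (((n : ℝ) + 1) / 2 + Mx) * (6 * R / d ^ 2 * T) ^ J) := by
          gcongr
      _ = E * h ^ J := by
          rw [hE, hT, Ebig, ← mul_assoc (6 * R / d ^ 2), mul_pow _ h]; ring
  induction m generalizing x with
  | zero =>
    have hsub : Metric.closedBall x T ⊆ Metric.closedBall x₀ (r / 2) := by
      apply Metric.closedBall_subset_closedBall'
      push_cast at hx; linarith
    have h1 := G.base hg (μ := ((n : ℝ) + 1) / 2) (S := η) (by positivity) (by ring) hJ hh hL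
      (hsub.trans (Metric.closedBall_subset_closedBall (by linarith)))
      (fun j x' hx' => hη j x' (hsub hx'))
    have h2 := hEm 0 (Nat.zero_le _)
    simp only [Nat.cast_zero, add_zero, mul_zero, zero_add, pow_one] at h2 ⊢
    refine h1.trans ?_
    calc _ ≤ n * (Q * (η + E * h ^ J * M₁)) := by gcongr
      _ ≤ n * (Q * (E * η + E * h ^ J * M₁)) := by gcongr; exact le_mul_of_one_le_left hη0 hE1
      _ = n * Q * E * (η + h ^ J * M₁) := by ring
      _ ≤ 2 * n * Q * E * (η + h ^ J * M₁) := by gcongr; linarith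
  | succ m ih =>
    have ih := ih (by omega)
    have hsub : ∀ x' ∈ Metric.closedBall x T, dist x' x₀ + (m + 1) * T ≤ r / 2 := by
      intro x' hx'
      have := dist_triangle x' x x₀
      have := Metric.mem_closedBall.1 hx'
      push_cast at hx
      linarith
    set B := (2 * n * Q * E) with hB
    have hB1 : 1 ≤ B := by
      have : 1 ≤ n * Q := one_le_mul_of_one_le_of_one_le hn' hQ
      have : 1 ≤ n * Q * E := one_le_mul_of_one_le_of_one_le this hE1
      rw [hB]; linarith
    set μ := ((n : ℝ) + 1) / 2 + m with hμ
    have hμ1 : 1 ≤ μ := by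
      have : (0:ℝ) ≤ m := Nat.cast_nonneg m
      rw [hμ]; linarith
    set Y := η + h ^ J * M₁ with hY
    have hY0 : 0 ≤ Y := by positivity
    have h1 := G.step hg (μ := μ) (S := B ^ (m + 1) * Y / h ^ (2 * m + 1)) (by positivity) hJ hh hL
      (x := x) (fun x' hx' => by
        have := hsub x' hx'
        have : 0 ≤ (m + 1) * T := by positivity
        rw [Metric.mem_closedBall]; linarith)
      (fun x' hx' => by
        rw [le_div_iff₀ (by positivity), mul_comm]
        exact ih x' (hsub x' hx'))
    have h2 := hEm m (by omega)
    have h3 : (2 / d ^ 2) ^ μ * (6 * R / d ^ 2 * T) ^ J ≤ E * h ^ J := by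
      refine le_trans ?_ h2
      exact le_mul_of_one_le_left (by positivity) (by linarith)
    have hc : 1 ≤ μ * (2 * μ + 2 - n) := by
      have e : 2 * μ + 2 - n = 3 + 2 * m := by rw [hμ]; ring
      rw [e]
      have : (0:ℝ) ≤ m := Nat.cast_nonneg m
      nlinarith
    have hμ' : ((n : ℝ) + 1) / 2 + (m + 1 : ℕ) = μ + 1 := by rw [hμ]; push_cast; ring
    rw [hμ']
    set I := |∫ y in Ω, g y * (‖x - y‖ ^ 2) ^ (-(μ + 1))| with hI
    rw [abs_mul, abs_of_pos (lt_of_lt_of_le one_pos hc)] at h1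
    calc h ^ (2 * (m + 1) + 1) * I = h ^ (2 * m + 1) * (h ^ 2 * (1 * I)) := by ring
      _ ≤ h ^ (2 * m + 1) * (h ^ 2 * (μ * (2 * μ + 2 - n) * I)) := by gcongr
      _ ≤ h ^ (2 * m + 1) * (n * (Q * (B ^ (m + 1) * Y / h ^ (2 * m + 1) + E * h ^ J * M₁))) := by
          refine mul_le_mul_of_nonneg_left (h1.trans ?_) (by positivity)
          gcongr
      _ = n * Q * (B ^ (m + 1) * Y + h ^ (2 * m + 1) * (E * h ^ J * M₁)) := by
          field_simp
      _ ≤ n * Q * (E * B ^ (m + 1) * Y + 1 * (E * h ^ J * M₁)) := by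
          have : h ^ (2 * m + 1) ≤ 1 := pow_le_one₀ hh.le hh1
          have : 1 * (B ^ (m + 1) * Y) ≤ E * (B ^ (m + 1) * Y) := by gcongr
          rw [one_mul, ← mul_assoc] at this
          gcongr
      _ ≤ n * Q * (E * B ^ (m + 1) * Y + E * B ^ (m + 1) * Y) := by
          have h5 : h ^ J * M₁ ≤ Y := by rw [hY]; linarith
          have h6 : 1 ≤ B ^ (m + 1) := one_le_pow₀ hB1
          have : h ^ J * M₁ ≤ B ^ (m + 1) * Y := h5.trans (le_mul_of_one_le_left hY0 h6)
          have : E * (h ^ J * M₁) ≤ E * (B ^ (m + 1) * Y) := by gcongr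
          have h8 : 1 * (E * h ^ J * M₁) ≤ E * B ^ (m + 1) * Y := by linarith
          gcongr
      _ = B ^ (m + 1 + 1) * Y := by rw [pow_succ B (m + 1), hB]; ring

lemma cc_le {μ : ℝ} (hμ : 0 < μ) (i : ℕ) : cc μ i ≤ 2 ^ i * 2 ^ μ := by
  have h := cc_remainder hμ (u := 1 / 2) (by rw [abs_of_pos]; norm_num) 0
  have h2 := cc_hasSum (μ := μ) (u := 1 / 2) (by rw [abs_of_pos] <;> norm_num)
  have h3 := le_hasSum h2 i fun j _ => mul_nonneg (cc_nonneg hμ _) (by positivity)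
  have h4 := (le_abs_self _).trans h
  simp only [Finset.range_zero, Finset.sum_empty, sub_zero, pow_zero, mul_one] at h4
  have h5 : cc μ i * (1 / 2) ^ i ≤ 2 ^ μ := h3.trans h4
  rw [one_div, inv_pow, ← div_eq_mul_inv, div_le_iff₀ (by positivity)] at h5
  linarith

lemma one_le_cc {μ : ℝ} (hμ : 1 ≤ μ) (i : ℕ) : 1 ≤ cc μ i := by
  unfold cc
  refine Finset.prod_induction _ (fun x : ℝ => 1 ≤ x)
    (fun a b ha hb => one_le_mul_of_one_le_of_one_le ha hb) le_rfl fun l _ => ?_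
  rw [one_le_div (by positivity)]
  linarith

/-- `⟨ξ, Z⟩` for the inversion `Z = (y - x₀) / |y - x₀|²`. -/
noncomputable def zet (x₀ ξ y : EuclideanSpace ℝ (Fin n)) : ℝ := inner ℝ ξ (y - x₀) / ‖x₀ - y‖ ^ 2

/-- Subtracting `s²|ξ|²` makes the squared distance to `y` affine in `s` along the line `x₀ + s ξ`. -/
lemma norm_line (x₀ ξ y : EuclideanSpace ℝ (Fin n)) (s : ℝ) (h0 : 0 < ‖x₀ - y‖ ^ 2) :
    ‖x₀ + s • ξ - y‖ ^ 2 - s ^ 2 * ‖ξ‖ ^ 2 = ‖x₀ - y‖ ^ 2 * (1 - s * (2 * zet x₀ ξ y)) := by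
  have : x₀ + s • ξ - y = (x₀ - y) + s • ξ := by abel
  rw [this, @norm_add_sq_real, inner_smul_right, norm_smul, mul_pow, Real.norm_eq_abs, sq_abs,
    real_inner_comm, ← neg_sub y x₀, inner_neg_right, zet, norm_sub_rev x₀ y, norm_neg]
  rw [norm_sub_rev x₀ y] at h0
  have hq : ‖y - x₀‖ ≠ 0 := fun h => by rw [h] at h0; norm_num at h0
  field_simp
  ring

lemma Geo.zet_le (G : Geo Ω x₀ r d R) {ξ : EuclideanSpace ℝ (Fin n)} (hξ : ‖ξ‖ ≤ 1) {y} (hy : y ∈ Ω) :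
    |zet x₀ ξ y| ≤ 1 / d := by
  have hx := Metric.mem_closedBall_self (x := x₀) G.r_pos.le
  have h0 := G.sq_pos hx hy
  have h1 := G.lower _ hx _ hy
  have hd := G.d_pos
  have hpos : 0 < ‖x₀ - y‖ := hd.trans_le h1
  rw [zet, abs_div, abs_of_pos h0, div_le_iff₀ h0]
  calc _ ≤ ‖ξ‖ * ‖y - x₀‖ := abs_real_inner_le_norm _ _
    _ ≤ 1 * ‖x₀ - y‖ := by rw [norm_sub_rev y]; gcongr
    _ = (1 / d * d) * ‖x₀ - y‖ := by rw [one_div_mul_cancel hd.ne']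
    _ ≤ (1 / d * ‖x₀ - y‖) * ‖x₀ - y‖ := by gcongr
    _ = _ := by ring

open Polynomial in
/-- Moments of `|x₀-y|^(-2μ) ⟨ξ, Z⟩^k` from expansion along the line `x₀ + s ξ`. By `norm_line`,
`(|x₀ + sξ - y|² - s²|ξ|²)^(-μ) = |x₀-y|^(-2μ) (1 - 2 s ⟨ξ, Z⟩)^(-μ)`, whose coefficient of `s^k` is a
multiple of the wanted kernel. The left side is a binomial series in the kernels
`|x₀ + sξ - y|^(-2(μ+i))`, whose moments are known to be small. -/
lemma Geo.line (G : Geo Ω x₀ r d R) {g : EuclideanSpace ℝ (Fin n) → ℝ}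
    (hg : Integrable g (volume.restrict Ω)) {μ h S τ : ℝ} (hμ : 1 ≤ μ) {J k : ℕ} (hk : k < J)
    (hh : 0 < h) (hτ : J * h ≤ τ) (hL : 6 * R / d ^ 2 * τ ≤ 1) (hτr : τ ≤ r / 4)
    (hS : ∀ i < J, ∀ x ∈ Metric.closedBall x₀ (r / 4),
      |∫ y in Ω, g y * (‖x - y‖ ^ 2) ^ (-(μ + i))| ≤ S)
    {ξ : EuclideanSpace ℝ (Fin n)} (hξ : ‖ξ‖ ≤ 1) :
    h ^ k * |∫ y in Ω, g y * ((‖x₀ - y‖ ^ 2) ^ (-μ) * zet x₀ ξ y ^ k)| ≤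
      Qc J * (J * (2 ^ J * 2 ^ μ) * S + 2 * ((2 / d ^ 2) ^ μ * (6 * R / d ^ 2 * τ) ^ J) *
        ∫ y in Ω, |g y|) := by
  have hd := G.d_pos
  have hR := G.R_ge
  have hr := G.r_pos
  have hr1 := G.r_le
  have hμ0 : 0 < μ := by linarith
  have hx0 := Metric.mem_closedBall_self (x := x₀) G.r_pos.le
  have hx4 := Metric.mem_closedBall_self (x := x₀) (ε := r / 4) (by positivity)
  have hS0 : 0 ≤ S := (abs_nonneg _).trans (hS 0 (by omega) x₀ hx4)
  have hτ0 : 0 ≤ τ := le_trans (by positivity) hτ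
  set P : EuclideanSpace ℝ (Fin n) → ℝ[X] := fun y =>
    ∑ l ∈ Finset.range J, C ((‖x₀ - y‖ ^ 2) ^ (-μ) * (cc μ l * (2 * zet x₀ ξ y) ^ l)) * X ^ l with hP
  set f : ℝ → EuclideanSpace ℝ (Fin n) → ℝ := fun s y =>
    ∑ i ∈ Finset.range J, (cc μ i * (s ^ 2 * ‖ξ‖ ^ 2) ^ i) * (‖x₀ + s • ξ - y‖ ^ 2) ^ (-(μ + i))
    with hf
  have hco : ∀ y, (P y).coeff k = cc μ k * 2 ^ k * ((‖x₀ - y‖ ^ 2) ^ (-μ) * zet x₀ ξ y ^ k) := by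
    intro y
    simp only [hP, finsetSum_coeff, coeff_C_mul, coeff_X_pow]
    rw [Finset.sum_eq_single k]
    · simp only [if_true]; rw [mul_pow]; ring
    · intro b _ hb; rw [if_neg hb.symm, mul_zero]
    · intro h; exact absurd (Finset.mem_range.2 hk) h
  have hs : ∀ i ≤ J, 0 ≤ i * h ∧ i * h ≤ τ ∧ i * h ≤ 1 ∧
      x₀ + (i * h) • ξ ∈ Metric.closedBall x₀ (r / 4) := by
    intro i hi
    have h0 : 0 ≤ i * h := by positivity
    have h1 : i * h ≤ J * h := by gcongr
    refine ⟨h0, by linarith, by linarith, ?_⟩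
    rw [Metric.mem_closedBall, dist_eq_norm, add_sub_cancel_left, norm_smul, Real.norm_of_nonneg h0]
    nlinarith [norm_nonneg ξ]
  have hb4 : Metric.closedBall x₀ (r / 4) ⊆ Metric.closedBall x₀ r :=
    Metric.closedBall_subset_closedBall (by linarith)
  have hfi : ∀ i ≤ J, ∀ l, Integrable (fun y => (cc μ l * ((i * h) ^ 2 * ‖ξ‖ ^ 2) ^ l) *
      (g y * (‖x₀ + (i * h) • ξ - y‖ ^ 2) ^ (-(μ + l)))) (volume.restrict Ω) := fun i hi l =>
    (G.int_rpow hg (hb4 (hs i hi).2.2.2) (by positivity)).const_mul _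
  have hfe : ∀ s, (fun y => g y * f s y) = fun y => ∑ l ∈ Finset.range J,
      (cc μ l * (s ^ 2 * ‖ξ‖ ^ 2) ^ l) * (g y * (‖x₀ + s • ξ - y‖ ^ 2) ^ (-(μ + l))) := by
    intro s; funext y
    simp only [hf, Finset.mul_sum]
    exact Finset.sum_congr rfl fun l _ => by ring
  have hmain := extraction hg f P J k (h := h) hh
    (e := 2 * ((2 / d ^ 2) ^ μ * (6 * R / d ^ 2 * τ) ^ J))
    (S := J * (2 ^ J * 2 ^ μ) * S)
    (Filter.Eventually.of_forall fun y => natDegree_sum_le_of_forall_le _ _ fun l hl =>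
      (natDegree_C_mul_X_pow_le _ _).trans (Finset.mem_range.1 hl).le)
    ?_ ?_ ?_ ?_
  · refine le_trans ?_ hmain
    simp_rw [hco]
    refine mul_le_mul_of_nonneg_left ?_ (by positivity)
    have : ∀ y, g y * (cc μ k * 2 ^ k * ((‖x₀ - y‖ ^ 2) ^ (-μ) * zet x₀ ξ y ^ k)) =
      cc μ k * 2 ^ k * (g y * ((‖x₀ - y‖ ^ 2) ^ (-μ) * zet x₀ ξ y ^ k)) := fun y => by ring
    simp_rw [this]
    rw [integral_const_mul, abs_mul]
    refine le_mul_of_one_le_left (abs_nonneg _) ?_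
    rw [abs_of_nonneg (mul_nonneg (cc_nonneg hμ0 _) (by positivity))]
    exact one_le_mul_of_one_le_of_one_le (one_le_cc hμ k) (one_le_pow₀ (by norm_num))
  · intro i hi
    obtain ⟨h0, h1, h2, h3⟩ := hs i hi
    refine G.ae fun y hy => ?_
    generalize (i : ℝ) * h = s at h0 h1 h2 h3 ⊢
    have hD := G.sq_pos (hb4 h3) hy
    have hDl := G.sq_lower (hb4 h3) hy
    have hD0 := G.sq_pos hx0 hy
    set D := ‖x₀ + s • ξ - y‖ ^ 2 with hDdef
    set D0 := ‖x₀ - y‖ ^ 2 with hD0def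
    have hLs : 6 * R / d ^ 2 * s ≤ 1 := le_trans (by gcongr) hL
    have hξ2 : ‖ξ‖ ^ 2 ≤ 1 := pow_le_one₀ (norm_nonneg _) hξ
    have hu : 2 * |s ^ 2 * ‖ξ‖ ^ 2 / D| ≤ 6 * R / d ^ 2 * s := by
      rw [abs_of_nonneg (by positivity)]
      calc 2 * (s ^ 2 * ‖ξ‖ ^ 2 / D) ≤ 2 * (s * 1 * 1 / d ^ 2) := by
            gcongr
            nlinarith
        _ = 2 * 1 / d ^ 2 * s := by ring
        _ ≤ 6 * R / d ^ 2 * s := by gcongr; norm_num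
    have hv : 2 * |s * (2 * zet x₀ ξ y)| ≤ 6 * R / d ^ 2 * s := by
      rw [abs_mul s, abs_mul, abs_of_nonneg h0, Nat.abs_ofNat]
      have := G.zet_le hξ hy
      calc 2 * (s * (2 * |zet x₀ ξ y|)) ≤ 2 * (s * (2 * (1 / d))) := by gcongr
        _ = 4 * d / d ^ 2 * s := by field_simp; ring
        _ ≤ 6 * R / d ^ 2 * s := by
          have := G.d_le
          gcongr <;> linarith
    have hmid : D * (1 - s ^ 2 * ‖ξ‖ ^ 2 / D) = D0 * (1 - s * (2 * zet x₀ ξ y)) := by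
      rw [← norm_line x₀ ξ y s hD0, mul_sub, mul_div_cancel₀ _ hD.ne', mul_one]
    have hu' := cc_remainder hμ0 (u := s ^ 2 * ‖ξ‖ ^ 2 / D) (by linarith) J
    have hv' := cc_remainder hμ0 (u := s * (2 * zet x₀ ξ y)) (by linarith) J
    have e1 : f s y = D ^ (-μ) * ∑ j ∈ Finset.range J, cc μ j * (s ^ 2 * ‖ξ‖ ^ 2 / D) ^ j := by
      simp only [hf, Finset.mul_sum]
      refine Finset.sum_congr rfl fun l _ => ?_
      rw [neg_add, ← hDdef, ← sub_eq_add_neg, Real.rpow_sub_natCast hD.ne', div_pow]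
      ring
    have e2 : (P y).eval s = D0 ^ (-μ) * ∑ j ∈ Finset.range J, cc μ j * (s * (2 * zet x₀ ξ y)) ^ j := by
      simp only [hP, eval_finsetSum, eval_mul, eval_C, eval_pow, eval_X, Finset.mul_sum]
      refine Finset.sum_congr rfl fun l _ => ?_
      rw [mul_pow s]; ring
    have e3 : D ^ (-μ) * (1 - s ^ 2 * ‖ξ‖ ^ 2 / D) ^ (-μ) =
        D0 ^ (-μ) * (1 - s * (2 * zet x₀ ξ y)) ^ (-μ) := by
      rw [← Real.mul_rpow hD.le (by linarith [le_abs_self (s ^ 2 * ‖ξ‖ ^ 2 / D)]), hmid,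
        Real.mul_rpow hD0.le (by linarith [le_abs_self (s * (2 * zet x₀ ξ y))])]
    have bound : ∀ {D' X : ℝ}, 0 < D' → d ^ 2 ≤ D' → 2 * |X| ≤ 6 * R / d ^ 2 * s →
        D' ^ (-μ) * (2 ^ μ * (2 * |X|) ^ J) ≤ (2 / d ^ 2) ^ μ * (6 * R / d ^ 2 * τ) ^ J := by
      intro D' X h1' h2' h3'
      have : D' ^ (-μ) * 2 ^ μ ≤ (2 / d ^ 2) ^ μ := by
        rw [Real.rpow_neg h1'.le, ← div_eq_inv_mul, ← Real.div_rpow (by norm_num) h1'.le]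
        gcongr
      have h4 : 2 * |X| ≤ 6 * R / d ^ 2 * τ := h3'.trans (by gcongr)
      rw [← mul_assoc]
      gcongr
    have t1 : |f s y - D ^ (-μ) * (1 - s ^ 2 * ‖ξ‖ ^ 2 / D) ^ (-μ)| ≤
        (2 / d ^ 2) ^ μ * (6 * R / d ^ 2 * τ) ^ J := by
      rw [e1, ← mul_sub, abs_mul, abs_of_pos (Real.rpow_pos_of_pos hD _), abs_sub_comm]
      exact le_trans (by gcongr) (bound hD hDl hu)
    have t2 : |D ^ (-μ) * (1 - s ^ 2 * ‖ξ‖ ^ 2 / D) ^ (-μ) - (P y).eval s| ≤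
        (2 / d ^ 2) ^ μ * (6 * R / d ^ 2 * τ) ^ J := by
      rw [e3, e2, ← mul_sub, abs_mul, abs_of_pos (Real.rpow_pos_of_pos hD0 _)]
      exact le_trans (by gcongr) (bound hD0 (G.sq_lower hx0 hy) hv)
    refine (abs_sub_le _ _ _).trans ((add_le_add t1 t2).trans_eq ?_)
    ring
  · intro i hi
    rw [hfe]
    exact integrable_finsetSum _ fun l _ => hfi i hi l
  · simp_rw [hco]
    have hi : Integrable (fun y => g y * (‖x₀ - y‖ ^ 2) ^ (-μ)) (volume.restrict Ω) :=
      G.int_rpow hg hx0 hμ0.le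
    have h2 := (hi.mul_bdd (g := fun y => zet x₀ ξ y ^ k) (c := (1 / d) ^ k) ?_ ?_).const_mul
      (cc μ k * 2 ^ k)
    · refine h2.congr (Filter.Eventually.of_forall fun y => ?_)
      dsimp only; ring
    · unfold zet
      exact Measurable.aestronglyMeasurable (by fun_prop)
    · refine G.ae fun y hy => ?_
      rw [norm_pow, Real.norm_eq_abs]
      gcongr
      exact G.zet_le hξ hy
  · intro i hi
    obtain ⟨h0, h1, h2, h3⟩ := hs i hi
    rw [hfe, integral_finsetSum _ fun l _ => hfi i hi l]
    refine (Finset.abs_sum_le_sum_abs _ _).trans ?_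
    calc _ ≤ ∑ l ∈ Finset.range J, (2 ^ J * 2 ^ μ) * S := by
          refine Finset.sum_le_sum fun l hl => ?_
          have hl' := Finset.mem_range.1 hl
          rw [integral_const_mul, abs_mul, abs_of_nonneg (mul_nonneg (cc_nonneg hμ0 _) (by positivity))]
          refine mul_le_mul ?_ (hS l hl' _ h3) (abs_nonneg _) (by positivity)
          have a1 : ((i * h) ^ 2 * ‖ξ‖ ^ 2) ^ l ≤ 1 := by
            refine pow_le_one₀ (by positivity) ?_
            rw [← mul_pow]
            exact pow_le_one₀ (by positivity) (by nlinarith [norm_nonneg ξ])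
          calc _ ≤ cc μ l * 1 := by gcongr; exact cc_nonneg hμ0 _
            _ ≤ 2 ^ l * 2 ^ μ := by rw [mul_one]; exact cc_le hμ0 l
            _ ≤ _ := by gcongr; norm_num
      _ = _ := by rw [Finset.sum_const, Finset.card_range, nsmul_eq_mul]; ring

end moments

/-! ### Moments of all orders -/

lemma Moderate.congr {f g : ℕ → ℝ} (hf : Moderate f) (h : ∀ N, g N = f N) : Moderate g :=
  hf.mono fun N => (congrArg abs (h N)).le

lemma moderate_Qc (a b : ℕ) : Moderate fun N => Qc (a * N + b) := by
  refine ((Moderate.linear a (b + 1)).pow_lin a (b + 2)).congr fun N => ?_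
  unfold Qc; push_cast; ring_nf

lemma moderate_rpow {A : ℝ} (hA : 0 < A) (c : ℝ) (a b : ℕ) :
    Moderate fun N => A ^ (c + (a * N + b : ℕ)) := by
  refine ((Moderate.const (A ^ c)).mul ((Moderate.const A).pow_lin a b)).congr fun N => ?_
  rw [Real.rpow_add hA, Real.rpow_natCast]

lemma moderate_Ebig (n : ℕ) {d R : ℝ} (hd : 0 < d) (a b c e : ℕ) :
    Moderate fun N => Ebig n d R (a * N + b) (c * N + e) := by
  have h1 := moderate_rpow (A := 2 / d ^ 2) (by positivity) (((n : ℝ) + 1) / 2) a b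
  have h2 := ((Moderate.const (6 * R / d ^ 2)).mul (Moderate.linear (2 * c) (2 * e + 1))).pow_lin c e
  refine (((Moderate.const (2 * R)).mul h1).mul h2).congr fun N => ?_
  unfold Ebig; push_cast; ring_nf

/-- Factor lost at each of the at most `2 N + 1` steps of the iterated Laplacian extraction, with
expansions of order `5 N + 4`. -/
noncomputable def Biter (n : ℕ) (d R : ℝ) (N : ℕ) : ℝ :=
  2 * n * Qc (2 * (5 * N + 4) + 1) * Ebig n d R (2 * N + 1) (5 * N + 4)

/-- The step size `h` is admissible when `Bcond r d R N * h ≤ 1`: all expansions converge and all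
points used stay in the ball of radius `r / 2`. -/
noncomputable def Bcond (r d R : ℝ) (N : ℕ) : ℝ :=
  (10 * N + 9) * (6 * R / d ^ 2) + (10 * N + 9) * (2 * N + 2) * (4 / r)

/-- Constant of the moment estimate. -/
noncomputable def Bmom (n : ℕ) (d R : ℝ) (N : ℕ) : ℝ :=
  Qc (N + 1) * ((N + 1) * (2 ^ (N + 1) * 2 ^ (((n : ℝ) + 1) / 2 + N)) * Biter n d R N ^ (2 * N + 2) +
    2 * (2 / d ^ 2) ^ (((n : ℝ) + 1) / 2 + N) * (6 * R / d ^ 2 * (10 * N + 9)) ^ (N + 1))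

lemma moderate_consts (n : ℕ) {r d R : ℝ} (hd : 0 < d) :
    Moderate fun N => Bcond r d R N + Bmom n d R N := by
  have hi : Moderate fun N => Biter n d R N := by
    have h1 := moderate_Qc 10 9
    have h2 := moderate_Ebig n (R := R) hd 2 1 5 4
    refine (((Moderate.const (2 * n)).mul h1).mul h2).congr fun N => ?_
    unfold Biter
    rw [show 2 * (5 * N + 4) + 1 = 10 * N + 9 by ring]
  have hl := Moderate.linear 10 9
  have hc : Moderate fun N => Bcond r d R N := by
    refine ((hl.mul (Moderate.const (6 * R / d ^ 2))).add
      ((hl.mul (Moderate.linear 2 2)).mul (Moderate.const (4 / r)))).congr fun N => ?_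
    unfold Bcond; push_cast; ring_nf
  refine hc.add ?_
  have q := moderate_Qc 1 1
  have p2 := moderate_rpow (A := 2) (by norm_num) (((n : ℝ) + 1) / 2) 1 0
  have pA := moderate_rpow (A := 2 / d ^ 2) (by positivity) (((n : ℝ) + 1) / 2) 1 0
  have t1 := ((Moderate.linear 1 1).mul (((Moderate.const 2).pow_lin 1 1).mul p2)).mul
    (hi.pow_lin 2 2)
  have t2 := ((Moderate.const 2).mul pA).mul
    ((((Moderate.const (6 * R / d ^ 2)).mul hl)).pow_lin 1 1)
  refine (q.mul (t1.add t2)).congr fun N => ?_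
  unfold Bmom
  push_cast
  simp only [one_mul, add_zero]

section
variable {n : ℕ} {Ω : Set (EuclideanSpace ℝ (Fin n))} {x₀ : EuclideanSpace ℝ (Fin n)} {r d R : ℝ}

/-- All moments of order at most `N` after inversion are controlled by the Riesz transforms. The
expansion error `h^(5N+4)` beats the total loss `h^(5N+3)`. -/
lemma Geo.moments (G : Geo Ω x₀ r d R) (hn : 1 ≤ n) (N : ℕ) {h : ℝ} (hh : 0 < h)
    (hB : Bcond r d R N * h ≤ 1) {g : EuclideanSpace ℝ (Fin n) → ℝ}
    (hg : Integrable g (volume.restrict Ω)) {η : ℝ}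
    (hη : ∀ j, ∀ x ∈ Metric.closedBall x₀ (r / 2),
      |∫ y in Ω, g y * ((‖x - y‖ ^ 2) ^ (-(((n : ℝ) + 1) / 2)) * (x j - y j))| ≤ η)
    {b k : ℕ} (hb : b ≤ N) (hk : k ≤ N) {ξ : EuclideanSpace ℝ (Fin n)} (hξ : ‖ξ‖ ≤ 1) :
    h ^ (5 * N + 3) * |∫ y in Ω, g y * ((‖x₀ - y‖ ^ 2) ^ (-(((n : ℝ) + 1) / 2 + b)) * zet x₀ ξ y ^ k)|
      ≤ Bmom n d R N * (η + h ^ (5 * N + 4) * ∫ y in Ω, |g y|) := by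
  have hd := G.d_pos
  have hR := G.R_ge
  have hr := G.r_pos
  have hr1 := G.r_le
  set M₁ := ∫ y in Ω, |g y| with hM₁
  have hM : 0 ≤ M₁ := integral_nonneg fun _ => abs_nonneg _
  have hη0 : 0 ≤ η := (abs_nonneg _).trans
    (hη ⟨0, hn⟩ x₀ (Metric.mem_closedBall_self (by positivity)))
  set T : ℝ := (10 * N + 9) * h with hT
  have hT0 : 0 < T := by positivity
  have hLT : 6 * R / d ^ 2 * T ≤ 1 := by
    refine le_trans ?_ hB
    rw [Bcond, hT, add_mul]
    have : 0 ≤ (10 * (N:ℝ) + 9) * (2 * N + 2) * (4 / r) * h := by positivity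
    linarith
  have hTr : (2 * N + 2) * T ≤ r / 4 := by
    have h1 : (10 * (N:ℝ) + 9) * (2 * N + 2) * (4 / r) * h ≤ 1 := by
      refine le_trans ?_ hB
      rw [Bcond, add_mul]
      have : 0 ≤ (10 * (N:ℝ) + 9) * (6 * R / d ^ 2) * h := by positivity
      linarith
    have h2 : (10 * (N:ℝ) + 9) * (2 * N + 2) * (4 / r) * h = (2 * N + 2) * T / (r / 4) := by
      rw [hT]; field_simp
    rw [h2, div_le_one (by positivity)] at h1
    exact h1
  have hN0 : (0:ℝ) ≤ N := Nat.cast_nonneg N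
  have hT' : (2 * ((5 * N + 4 : ℕ) : ℝ) + 1) * h = T := by rw [hT]; push_cast; ring
  have hTr' : T ≤ r / 4 := by nlinarith
  have hh1 : h ≤ 1 := by
    have : h ≤ T := by rw [hT]; nlinarith
    linarith
  set Bi := Biter n d R N with hBi
  have hBi1 : 1 ≤ Bi := by
    have h1 : (1:ℝ) ≤ n := by exact_mod_cast hn
    have h2 := G.one_le_Ebig (n := n) (2 * N + 1) (5 * N + 4)
    have h3 := one_le_Qc (2 * (5 * N + 4) + 1)
    rw [hBi, Biter]
    exact one_le_mul_of_one_le_of_one_le (one_le_mul_of_one_le_of_one_le (by linarith) h3) h2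
  set Y := η + h ^ (5 * N + 4) * M₁ with hY
  have hY0 : 0 ≤ Y := by positivity
  set S := Bi ^ (2 * N + 2) * Y / h ^ (4 * N + 3) with hS
  have hGm : ∀ m ≤ 2 * N + 1, ∀ x ∈ Metric.closedBall x₀ (r / 4),
      |∫ y in Ω, g y * (‖x - y‖ ^ 2) ^ (-(((n : ℝ) + 1) / 2 + m))| ≤ S := by
    intro m hm x hx
    have h1 := G.laplace_iter hn hg (J := 5 * N + 4) (by omega) hh (by rw [hT']; exact hLT) hη m hm x
      (by
        rw [hT']
        have := Metric.mem_closedBall.1 hx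
        have h2 : ((m:ℝ) + 1) * T ≤ (2 * N + 2) * T := by
          refine mul_le_mul_of_nonneg_right ?_ hT0.le
          have : (m : ℝ) ≤ (2 * N + 1 : ℕ) := by exact_mod_cast hm
          push_cast at this; linarith
        linarith)
    rw [hS, le_div_iff₀ (by positivity), mul_comm]
    calc _ ≤ h ^ (2 * m + 1) * |∫ y in Ω, g y * (‖x - y‖ ^ 2) ^ (-(((n : ℝ) + 1) / 2 + m))| := by
          refine mul_le_mul_of_nonneg_right ?_ (abs_nonneg _)
          exact pow_le_pow_of_le_one hh.le hh1 (by omega)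
      _ ≤ Bi ^ (m + 1) * Y := h1
      _ ≤ Bi ^ (2 * N + 2) * Y :=
          mul_le_mul_of_nonneg_right (pow_le_pow_right₀ hBi1 (by omega)) hY0
  have hb' : (b : ℝ) ≤ N := by exact_mod_cast hb
  have hl := G.line hg (μ := ((n : ℝ) + 1) / 2 + b) (h := h) (S := S) (τ := T) (J := N + 1) (k := k)
    (by
      have : (1:ℝ) ≤ n := by exact_mod_cast hn
      have : (0:ℝ) ≤ b := Nat.cast_nonneg b
      linarith) (by omega) hh (by rw [hT]; push_cast; nlinarith) hLT hTr'
    (by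
      intro i hi x hx
      have h1 := hGm (b + i) (by omega) x hx
      rwa [Nat.cast_add, ← add_assoc] at h1) hξ
  set I := |∫ y in Ω, g y * ((‖x₀ - y‖ ^ 2) ^ (-(((n : ℝ) + 1) / 2 + b)) * zet x₀ ξ y ^ k)|
  have hS0 : 0 ≤ S := by positivity
  have e1 : (2:ℝ) ^ (((n : ℝ) + 1) / 2 + b) ≤ 2 ^ (((n : ℝ) + 1) / 2 + N) :=
    Real.rpow_le_rpow_of_exponent_le (by norm_num) (by linarith)
  have e2 : (2 / d ^ 2) ^ (((n : ℝ) + 1) / 2 + b) ≤ (2 / d ^ 2) ^ (((n : ℝ) + 1) / 2 + N) :=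
    Real.rpow_le_rpow_of_exponent_le G.one_le_A (by linarith)
  have hQ := one_le_Qc (N + 1)
  set c1 : ℝ := (N + 1) * (2 ^ (N + 1) * 2 ^ (((n : ℝ) + 1) / 2 + N)) with hc1
  set A' := (2 / d ^ 2) ^ (((n : ℝ) + 1) / 2 + N) with hA'
  have hl2 : h ^ k * I ≤ Qc (N + 1) * (c1 * S + 2 * (A' * (6 * R / d ^ 2 * T) ^ (N + 1)) * M₁) := by
    refine hl.trans ?_
    rw [hc1]; push_cast
    gcongr
  calc h ^ (5 * N + 3) * I = h ^ (4 * N + 3) * h ^ (N - k) * (h ^ k * I) := by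
        rw [show 5 * N + 3 = (4 * N + 3) + (N - k) + k by omega, pow_add, pow_add]; ring
    _ ≤ h ^ (4 * N + 3) * 1 * (Qc (N + 1) * (c1 * S + 2 * (A' * (6 * R / d ^ 2 * T) ^ (N + 1)) * M₁)) := by
        have : h ^ (N - k) ≤ 1 := pow_le_one₀ hh.le hh1
        gcongr
    _ = Qc (N + 1) * (c1 * Bi ^ (2 * N + 2) * Y + 2 * A' * (6 * R / d ^ 2 * (10 * N + 9)) ^ (N + 1) *
          (h ^ (5 * N + 4) * M₁)) := by
        rw [hS, hT, ← mul_assoc (6 * R / d ^ 2), mul_pow _ h,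
          show h ^ (5 * N + 4) = h ^ (4 * N + 3) * h ^ (N + 1) by rw [← pow_add]; congr 1; ring]
        generalize (6 * R / d ^ 2 * (10 * (N:ℝ) + 9)) = w
        field_simp
    _ ≤ Qc (N + 1) * (c1 * Bi ^ (2 * N + 2) * Y + 2 * A' * (6 * R / d ^ 2 * (10 * N + 9)) ^ (N + 1) * Y) := by
        have : h ^ (5 * N + 4) * M₁ ≤ Y := by rw [hY]; linarith
        gcongr
    _ = _ := by rw [Bmom]; ring
end

/-! ### Powers of the inverted squared distance -/

/-- `d² / 4` times the squared distance of the inverted points, as a function of `w` and `y`. -/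
noncomputable def theta {n : ℕ} (x₀ : EuclideanSpace ℝ (Fin n)) (d : ℝ)
    (w y : EuclideanSpace ℝ (Fin n)) : ℝ :=
  d ^ 2 / 4 * (‖w - y‖ ^ 2 / (‖x₀ - w‖ ^ 2 * ‖x₀ - y‖ ^ 2))

section
variable {n : ℕ} {Ω : Set (EuclideanSpace ℝ (Fin n))} {x₀ : EuclideanSpace ℝ (Fin n)} {r d R : ℝ}

lemma theta_nonneg (x₀ : EuclideanSpace ℝ (Fin n)) (d : ℝ) (w y) : 0 ≤ theta x₀ d w y := by
  unfold theta; positivity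

lemma measurable_zet (x₀ ξ : EuclideanSpace ℝ (Fin n)) : Measurable (zet x₀ ξ) := by
  unfold zet; fun_prop

/-- After inversion, `1 - theta` is affine in `|y - x₀|⁻²` and `zet`. -/
lemma one_sub_theta (x₀ : EuclideanSpace ℝ (Fin n)) {d : ℝ} {w y : EuclideanSpace ℝ (Fin n)}
    (hw : 0 < ‖x₀ - w‖ ^ 2) (hy : 0 < ‖x₀ - y‖ ^ 2) :
    1 - theta x₀ d w y = (1 - d ^ 2 / 4 * (‖x₀ - w‖ ^ 2)⁻¹) + (-(d ^ 2 / 4)) * (‖x₀ - y‖ ^ 2)⁻¹ +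
      d / 2 * zet x₀ ((d * (‖x₀ - w‖ ^ 2)⁻¹) • (w - x₀)) y := by
  unfold theta zet
  have e : ‖w - y‖ ^ 2 = ‖x₀ - w‖ ^ 2 + ‖x₀ - y‖ ^ 2 - 2 * inner ℝ (w - x₀) (y - x₀) := by
    rw [show w - y = (w - x₀) - (y - x₀) by abel, @norm_sub_sq_real, norm_sub_rev w, norm_sub_rev y]
    ring
  rw [e, real_inner_smul_left]
  generalize ‖x₀ - w‖ ^ 2 = D at hw
  generalize ‖x₀ - y‖ ^ 2 = D' at hy
  field_simp
  ring

lemma Geo.center (G : Geo Ω x₀ r d R) : x₀ ∈ Metric.closedBall x₀ r :=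
  Metric.mem_closedBall_self G.r_pos.le

/-- Bounds for the mixed moments give bounds against powers of an affine expression in `|y - x₀|⁻²`
and `zet`; each factor costs at most `3`. -/
lemma Geo.kernel_induct (G : Geo Ω x₀ r d R) {g : EuclideanSpace ℝ (Fin n) → ℝ}
    (hg : Integrable g (volume.restrict Ω)) {N : ℕ} {e μ α β γ : ℝ} (hμ : 0 ≤ μ)
    (hα : |α| ≤ 1) (hβ : |β| ≤ 1) (hγ : |γ| ≤ 1) {ξ : EuclideanSpace ℝ (Fin n)} (hξ : ‖ξ‖ ≤ 1)
    (he : ∀ b ≤ N, ∀ k ≤ N,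
      |∫ y in Ω, g y * ((‖x₀ - y‖ ^ 2) ^ (-(μ + b)) * zet x₀ ξ y ^ k)| ≤ e) (j : ℕ) :
    ∀ b c : ℕ, b + c + j ≤ N →
      |∫ y in Ω, g y * ((‖x₀ - y‖ ^ 2) ^ (-(μ + b)) * zet x₀ ξ y ^ c *
        (α + β * (‖x₀ - y‖ ^ 2)⁻¹ + γ * zet x₀ ξ y) ^ j)| ≤ 3 ^ j * e := by
  have hd := G.d_pos
  have hmz := measurable_zet x₀ ξ
  have hInt : ∀ b c i : ℕ, Integrable (fun y => g y * ((‖x₀ - y‖ ^ 2) ^ (-(μ + b)) * zet x₀ ξ y ^ c *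
        (α + β * (‖x₀ - y‖ ^ 2)⁻¹ + γ * zet x₀ ξ y) ^ i)) (volume.restrict Ω) := by
    intro b c i
    refine hg.mul_bdd (c := (2 / d ^ 2) ^ (μ + b) * (1 / d) ^ c * (1 + (d ^ 2)⁻¹ + 1 / d) ^ i) ?_
      (G.ae fun y hy => ?_)
    · exact Measurable.aestronglyMeasurable
        (((Measurable.pow_const (by fun_prop) _).mul (hmz.pow_const _)).mul
          (Measurable.pow_const (by fun_prop) _))
    · have h1 := G.rpow_neg_le G.center hy (μ := μ + b) (by positivity)
      have h2 := G.zet_le hξ hy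
      have h3 : (‖x₀ - y‖ ^ 2)⁻¹ ≤ (d ^ 2)⁻¹ := by
        have := G.sq_lower G.center hy
        gcongr
      have h4 : |α + β * (‖x₀ - y‖ ^ 2)⁻¹ + γ * zet x₀ ξ y| ≤ 1 + (d ^ 2)⁻¹ + 1 / d := by
        refine (abs_add_le _ _).trans (add_le_add ((abs_add_le _ _).trans (add_le_add hα ?_)) ?_)
        · rw [abs_mul, abs_of_nonneg (by positivity : 0 ≤ (‖x₀ - y‖ ^ 2)⁻¹)]
          calc _ ≤ 1 * (d ^ 2)⁻¹ := by gcongr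
            _ = _ := one_mul _
        · rw [abs_mul]
          calc _ ≤ 1 * (1 / d) := by gcongr
            _ = _ := one_mul _
      rw [Real.norm_eq_abs, abs_mul, abs_mul, abs_pow, abs_pow,
        abs_of_nonneg (by positivity : 0 ≤ (‖x₀ - y‖ ^ 2) ^ (-(μ + b)))]
      gcongr
  induction j with
  | zero =>
    intro b c h
    simpa using he b (by omega) c (by omega)
  | succ j ih =>
    intro b c h
    have h1 := ih b c (by omega)
    have h2 := ih (b + 1) c (by omega)
    have h3 := ih b (c + 1) (by omega)
    have key : ∫ y in Ω, g y * ((‖x₀ - y‖ ^ 2) ^ (-(μ + b)) * zet x₀ ξ y ^ c *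
        (α + β * (‖x₀ - y‖ ^ 2)⁻¹ + γ * zet x₀ ξ y) ^ (j + 1)) =
        α * (∫ y in Ω, g y * ((‖x₀ - y‖ ^ 2) ^ (-(μ + b)) * zet x₀ ξ y ^ c *
        (α + β * (‖x₀ - y‖ ^ 2)⁻¹ + γ * zet x₀ ξ y) ^ j)) +
        β * (∫ y in Ω, g y * ((‖x₀ - y‖ ^ 2) ^ (-(μ + (b + 1 : ℕ))) * zet x₀ ξ y ^ c *
        (α + β * (‖x₀ - y‖ ^ 2)⁻¹ + γ * zet x₀ ξ y) ^ j)) +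
        γ * (∫ y in Ω, g y * ((‖x₀ - y‖ ^ 2) ^ (-(μ + b)) * zet x₀ ξ y ^ (c + 1) *
        (α + β * (‖x₀ - y‖ ^ 2)⁻¹ + γ * zet x₀ ξ y) ^ j)) := by
      have e1 := integral_add ((hInt b c j).const_mul α) ((hInt (b + 1) c j).const_mul β)
      have e2 := integral_add (((hInt b c j).const_mul α).add ((hInt (b + 1) c j).const_mul β))
          ((hInt b (c + 1) j).const_mul γ)
      simp only [Pi.add_apply] at e2
      rw [← integral_const_mul, ← integral_const_mul, ← integral_const_mul, ← e1, ← e2]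
      refine setIntegral_congr_fun G.meas fun y hy => ?_
      have hp := G.sq_pos G.center hy
      rw [show -(μ + (b + 1 : ℕ)) = -(μ + b) - 1 by push_cast; ring, Real.rpow_sub_one hp.ne']
      field_simp
      ring
    rw [key]
    refine (abs_add_le _ _).trans ((add_le_add ((abs_add_le _ _).trans le_rfl) le_rfl).trans ?_)
    rw [abs_mul, abs_mul, abs_mul]
    have a1 := mul_le_mul hα h1 (abs_nonneg _) zero_le_one
    have a2 := mul_le_mul hβ h2 (abs_nonneg _) zero_le_one
    have a3 := mul_le_mul hγ h3 (abs_nonneg _) zero_le_one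
    rw [pow_succ]
    linarith

/-- Since `1 - theta` is affine in `|y - x₀|⁻²` and `zet`, bounds for the moments in all directions
control its powers, uniformly in `w ∈ Ω`. -/
lemma Geo.kernel (G : Geo Ω x₀ r d R) {g : EuclideanSpace ℝ (Fin n) → ℝ}
    (hg : Integrable g (volume.restrict Ω)) {N : ℕ} {e μ : ℝ} (hμ : 0 ≤ μ)
    (he : ∀ ξ : EuclideanSpace ℝ (Fin n), ‖ξ‖ ≤ 1 → ∀ b ≤ N, ∀ k ≤ N,
      |∫ y in Ω, g y * ((‖x₀ - y‖ ^ 2) ^ (-(μ + b)) * zet x₀ ξ y ^ k)| ≤ e)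
    {w : EuclideanSpace ℝ (Fin n)} (hw : w ∈ Ω) :
    |∫ y in Ω, g y * ((‖x₀ - y‖ ^ 2) ^ (-μ) * (1 - theta x₀ d w y) ^ N)| ≤ 3 ^ N * e := by
  have hd := G.d_pos
  have hd1 := G.d_le
  have hpw := G.sq_pos G.center hw
  have hlw := G.sq_lower G.center hw
  have hlw' := G.lower x₀ G.center w hw
  have hq : 0 ≤ d ^ 2 / 4 * (‖x₀ - w‖ ^ 2)⁻¹ ∧ d ^ 2 / 4 * (‖x₀ - w‖ ^ 2)⁻¹ ≤ 1 := by
    refine ⟨by positivity, ?_⟩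
    rw [← div_eq_mul_inv, div_le_one hpw]
    nlinarith
  have hξ : ‖(d * (‖x₀ - w‖ ^ 2)⁻¹) • (w - x₀)‖ ≤ 1 := by
    have h0 : 0 < ‖x₀ - w‖ := hd.trans_le hlw'
    rw [norm_smul, Real.norm_of_nonneg (by positivity), norm_sub_rev w x₀]
    rw [show d * (‖x₀ - w‖ ^ 2)⁻¹ * ‖x₀ - w‖ = d / ‖x₀ - w‖ by field_simp, div_le_one h0]
    exact hlw'
  have h := G.kernel_induct hg hμ (N := N) (e := e) (α := 1 - d ^ 2 / 4 * (‖x₀ - w‖ ^ 2)⁻¹)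
    (β := -(d ^ 2 / 4)) (γ := d / 2)
    (by rw [abs_of_nonneg (by linarith)]; linarith [hq.1])
    (by rw [abs_neg, abs_of_nonneg (by positivity)]; nlinarith)
    (by rw [abs_of_nonneg (by positivity)]; linarith) hξ (he _ hξ) N 0 0 (by omega)
  convert h using 2
  refine setIntegral_congr_fun G.meas fun y hy => ?_
  rw [one_sub_theta x₀ hpw (G.sq_pos G.center hy)]
  simp
end

/-! ### Pointwise bounds for the Riesz transforms -/

section
variable {n : ℕ} {Ω₁ Ω₂ : Set (EuclideanSpace ℝ (Fin n))} {x₀ : EuclideanSpace ℝ (Fin n)} {r d R : ℝ}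

/-- Lipschitz constant of the kernels `x ↦ (x j - y j) / |x - y|^(n+1)` where `d ≤ |x - y| ≤ R`. -/
noncomputable def Lip (n : ℕ) (d R : ℝ) : ℝ :=
  1 / d ^ (n + 1) + R * ((n + 1) * R ^ n) / (d ^ (n + 1) * d ^ (n + 1))

lemma riesz_kernel_lip (hd : 0 < d) (hR : 0 ≤ R) {x x' y : EuclideanSpace ℝ (Fin n)}
    (hl : d ≤ ‖x - y‖) (hl' : d ≤ ‖x' - y‖) (hu : ‖x - y‖ ≤ R) (hu' : ‖x' - y‖ ≤ R) (j : Fin n) :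
    |(x j - y j) / ‖x - y‖ ^ (n + 1) - (x' j - y j) / ‖x' - y‖ ^ (n + 1)| ≤ Lip n d R * ‖x - x'‖ := by
  have hc : ∀ z : EuclideanSpace ℝ (Fin n), |z j| ≤ ‖z‖ := fun z => PiLp.norm_apply_le z j
  have h1 : |x j - x' j| ≤ ‖x - x'‖ := hc (x - x')
  have h2 : |x' j - y j| ≤ R := (hc (x' - y)).trans hu'
  set a := ‖x - y‖
  set b := ‖x' - y‖
  have ha : 0 < a := hd.trans_le hl
  have hb : 0 < b := hd.trans_le hl'
  have hab : |b - a| ≤ ‖x - x'‖ := by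
    have := abs_norm_sub_norm_le (x' - y) (x - y)
    rwa [show x' - y - (x - y) = -(x - x') by abel, norm_neg] at this
  have hp : |b ^ (n + 1) - a ^ (n + 1)| ≤ ‖x - x'‖ * ((n + 1) * R ^ n) := by
    refine (abs_pow_sub_pow_le b a (n + 1)).trans ?_
    rw [abs_of_pos ha, abs_of_pos hb, mul_assoc, Nat.add_sub_cancel]
    push_cast
    have : max b a ≤ R := max_le hu' hu
    have : 0 ≤ max b a := hb.le.trans (le_max_left _ _)
    gcongr
  have e : (x j - y j) / a ^ (n + 1) - (x' j - y j) / b ^ (n + 1) =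
      (x j - x' j) / a ^ (n + 1) + (x' j - y j) * (b ^ (n + 1) - a ^ (n + 1)) / (a ^ (n + 1) * b ^ (n + 1)) := by
    field_simp; ring
  rw [e]
  refine (abs_add_le _ _).trans ?_
  rw [abs_div, abs_div, abs_mul, abs_of_pos (pow_pos ha (n + 1)),
    abs_of_pos (mul_pos (pow_pos ha (n + 1)) (pow_pos hb (n + 1)))]
  calc _ ≤ ‖x - x'‖ / d ^ (n + 1) + R * (‖x - x'‖ * ((n + 1) * R ^ n)) / (d ^ (n + 1) * d ^ (n + 1)) := by
        gcongr
    _ = _ := by unfold Lip; ring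

lemma integrable_riesz (hd : 0 < d) (hm₂ : MeasurableSet Ω₂) {g : EuclideanSpace ℝ (Fin n) → ℝ}
    (hg : IntegrableOn g Ω₂) {x : EuclideanSpace ℝ (Fin n)} (hl : ∀ y ∈ Ω₂, d ≤ ‖x - y‖)
    (hu : ∀ y ∈ Ω₂, ‖x - y‖ ≤ R) (j : Fin n) :
    IntegrableOn (fun y => g y * ((x j - y j) / ‖x - y‖ ^ (n + 1))) Ω₂ ∧
    |∫ y in Ω₂, g y * ((x j - y j) / ‖x - y‖ ^ (n + 1))| ≤ R / d ^ (n + 1) * ∫ y in Ω₂, |g y| := by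
  have hb : ∀ᵐ y ∂(volume.restrict Ω₂), |(x j - y j) / ‖x - y‖ ^ (n + 1)| ≤ R / d ^ (n + 1) := by
    refine (ae_restrict_iff' hm₂).2 (Filter.Eventually.of_forall fun y hy => ?_)
    have h1 : |x j - y j| ≤ ‖x - y‖ := PiLp.norm_apply_le (x - y) j
    have h2 := hl y hy
    have h3 := hu y hy
    rw [abs_div, abs_of_nonneg (by positivity : 0 ≤ ‖x - y‖ ^ (n + 1))]
    have hR : 0 ≤ R := (norm_nonneg _).trans h3
    have := h1.trans h3
    gcongr
  exact ⟨hg.mul_bdd (c := R / d ^ (n + 1)) (Measurable.aestronglyMeasurable (by fun_prop)) hb,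
    abs_integral_mul_le hg hb⟩

lemma truncRiesz_eq (j : Fin n) (g : EuclideanSpace ℝ (Fin n) → ℝ) (x) :
    truncRiesz n Ω₂ j g x = ∫ y in Ω₂, g y * ((x j - y j) / ‖x - y‖ ^ (n + 1)) := by
  simp only [truncRiesz, mul_div_assoc]

lemma truncRiesz_eq_rpow (j : Fin n) (g : EuclideanSpace ℝ (Fin n) → ℝ) (x) :
    truncRiesz n Ω₂ j g x =
      ∫ y in Ω₂, g y * ((‖x - y‖ ^ 2) ^ (-(((n : ℝ) + 1) / 2)) * (x j - y j)) := by
  rw [truncRiesz_eq]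
  congr 1; ext y
  rw [Real.rpow_neg (by positivity), ← Real.rpow_natCast ‖x - y‖ 2, ← Real.rpow_mul (norm_nonneg _),
    ← Real.rpow_natCast ‖x - y‖ (n + 1)]
  push_cast
  rw [show 2 * (((n : ℝ) + 1) / 2) = n + 1 by ring, div_eq_inv_mul]

lemma truncRiesz_lip (hd : 0 < d) (hR : 0 ≤ R) (hm₂ : MeasurableSet Ω₂)
    {g : EuclideanSpace ℝ (Fin n) → ℝ}
    (hg : IntegrableOn g Ω₂) (hl : ∀ x ∈ Ω₁, ∀ y ∈ Ω₂, d ≤ ‖x - y‖)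
    (hu : ∀ x ∈ Ω₁, ∀ y ∈ Ω₂, ‖x - y‖ ≤ R) (j : Fin n) {x x' : EuclideanSpace ℝ (Fin n)}
    (hx : x ∈ Ω₁) (hx' : x' ∈ Ω₁) :
    |truncRiesz n Ω₂ j g x - truncRiesz n Ω₂ j g x'| ≤ Lip n d R * ‖x - x'‖ * ∫ y in Ω₂, |g y| := by
  rw [truncRiesz_eq, truncRiesz_eq, ← integral_sub
    (integrable_riesz hd hm₂ hg (hl x hx) (hu x hx) j).1
    (integrable_riesz hd hm₂ hg (hl x' hx') (hu x' hx') j).1]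
  simp only [← mul_sub]
  refine abs_integral_mul_le hg ((ae_restrict_iff' hm₂).2 (Filter.Eventually.of_forall fun y hy => ?_))
  exact riesz_kernel_lip hd hR (hl x hx y hy) (hl x' hx' y hy) (hu x hx y hy) (hu x' hx' y hy) j

lemma Lip_nonneg (n : ℕ) (hd : 0 < d) (hR : 0 ≤ R) : 0 ≤ Lip n d R := by unfold Lip; positivity

lemma truncRiesz_sq_integrable (hd : 0 < d) (hR : 0 ≤ R) (ho : IsOpen Ω₁)
    (hb : Bornology.IsBounded Ω₁) (hm₂ : MeasurableSet Ω₂)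
    {g : EuclideanSpace ℝ (Fin n) → ℝ}
    (hg : IntegrableOn g Ω₂) (hl : ∀ x ∈ Ω₁, ∀ y ∈ Ω₂, d ≤ ‖x - y‖)
    (hu : ∀ x ∈ Ω₁, ∀ y ∈ Ω₂, ‖x - y‖ ≤ R) (j : Fin n) :
    IntegrableOn (fun x => truncRiesz n Ω₂ j g x ^ 2) Ω₁ := by
  have hM : 0 ≤ ∫ y in Ω₂, |g y| := integral_nonneg fun _ => abs_nonneg _
  have hL := Lip_nonneg n hd hR
  have hlip : LipschitzOnWith ⟨Lip n d R * ∫ y in Ω₂, |g y|, by positivity⟩ (truncRiesz n Ω₂ j g) Ω₁ := by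
    refine LipschitzOnWith.of_dist_le_mul fun x hx x' hx' => ?_
    rw [Real.dist_eq, dist_eq_norm]
    refine (truncRiesz_lip hd hR hm₂ hg hl hu j hx hx').trans (le_of_eq ?_)
    change _ = (Lip n d R * ∫ y in Ω₂, |g y|) * _
    ring
  have hfin : volume Ω₁ < ⊤ := hb.measure_lt_top
  refine IntegrableOn.of_bound hfin ((hlip.continuousOn.pow 2).aestronglyMeasurable ho.measurableSet)
    ((R / d ^ (n + 1) * ∫ y in Ω₂, |g y|) ^ 2)
    ((ae_restrict_iff' ho.measurableSet).2 (Filter.Eventually.of_forall fun x hx => ?_))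
  have := (integrable_riesz hd hm₂ hg (hl x hx) (hu x hx) j).2
  rw [← truncRiesz_eq] at this
  rw [norm_pow, Real.norm_eq_abs]
  gcongr

/-- Pointwise control of the Riesz transforms by their `L²` norm, by averaging over a ball of radius
`ρ` and the Lipschitz bound. -/
lemma truncRiesz_pointwise (hd : 0 < d) (hR : 0 ≤ R) (ho : IsOpen Ω₁)
    (hb : Bornology.IsBounded Ω₁) (hm₂ : MeasurableSet Ω₂)
    {g : EuclideanSpace ℝ (Fin n) → ℝ}
    (hg : IntegrableOn g Ω₂) (hl : ∀ x ∈ Ω₁, ∀ y ∈ Ω₂, d ≤ ‖x - y‖)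
    (hu : ∀ x ∈ Ω₁, ∀ y ∈ Ω₂, ‖x - y‖ ≤ R) (j : Fin n) {x : EuclideanSpace ℝ (Fin n)} {ρ ε : ℝ}
    (hρ : 0 < ρ) (hρ1 : ρ ≤ 1) (hx : Metric.ball x ρ ⊆ Ω₁) (hε : 0 ≤ ε)
    (h : ∫ x in Ω₁, truncRiesz n Ω₂ j g x ^ 2 ≤ ε ^ 2) :
    |truncRiesz n Ω₂ j g x| ≤
      2 / √(volume.real (Metric.ball (0 : EuclideanSpace ℝ (Fin n)) 1)) / ρ ^ n * ε +
        2 * Lip n d R * ρ * ∫ y in Ω₂, |g y| := by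
  set V := volume.real (Metric.ball (0 : EuclideanSpace ℝ (Fin n)) 1)
  set M := ∫ y in Ω₂, |g y|
  have hM : 0 ≤ M := integral_nonneg fun _ => abs_nonneg _
  have hL := Lip_nonneg n hd hR
  have hV : 0 < V := ENNReal.toReal_pos (Metric.measure_ball_pos _ _ one_pos).ne' measure_ball_lt_top.ne
  have hvol : volume.real (Metric.ball x ρ) = ρ ^ n * V := by
    rw [Measure.real, Measure.addHaar_ball_of_pos _ _ hρ, ENNReal.toReal_mul,
      ENNReal.toReal_ofReal (by positivity)]
    simp [V, Measure.real]
  have hInt := truncRiesz_sq_integrable hd hR ho hb hm₂ hg hl hu j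
  set F := truncRiesz n Ω₂ j g
  have hxx : x ∈ Ω₁ := hx (Metric.mem_ball_self hρ)
  have hpt : ∀ x' ∈ Metric.ball x ρ, F x ^ 2 ≤ 2 * F x' ^ 2 + 2 * (Lip n d R * ρ * M) ^ 2 := by
    intro x' hx'
    have h1 := truncRiesz_lip hd hR hm₂ hg hl hu j hxx (hx hx')
    have h2 : ‖x - x'‖ ≤ ρ := by
      rw [← dist_eq_norm, dist_comm]; exact (Metric.mem_ball.1 hx').le
    have h3 : |F x - F x'| ≤ Lip n d R * ρ * M := h1.trans (by gcongr)
    have h4 := sq_le_sq' (abs_le.1 h3).1 (abs_le.1 h3).2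
    nlinarith [sq_nonneg (F x - 2 * F x')]
  have hI : ρ ^ n * V * F x ^ 2 ≤ 2 * ε ^ 2 + ρ ^ n * V * (2 * (Lip n d R * ρ * M) ^ 2) := by
    have hfin : volume (Metric.ball x ρ) ≠ ⊤ := measure_ball_lt_top.ne
    have i1 : IntegrableOn (fun x' => 2 * F x' ^ 2) (Metric.ball x ρ) := (hInt.mono_set hx).const_mul 2
    have i2 : ∀ c : ℝ, IntegrableOn (fun _ => c) (Metric.ball x ρ) := fun c => integrableOn_const hfin
    have h1 := setIntegral_mono_on (i2 (F x ^ 2)) (i1.add (i2 (2 * (Lip n d R * ρ * M) ^ 2)))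
      measurableSet_ball hpt
    have h2 : ∫ x' in Metric.ball x ρ, F x' ^ 2 ≤ ∫ x' in Ω₁, F x' ^ 2 :=
      setIntegral_mono_set hInt (Filter.Eventually.of_forall fun _ => sq_nonneg _) hx.eventuallyLE
    have h3 := integral_add i1 (i2 (2 * (Lip n d R * ρ * M) ^ 2))
    simp only [Pi.add_apply] at h1
    rw [h3, integral_const_mul] at h1
    simp only [setIntegral_const, hvol, smul_eq_mul] at h1
    linarith
  have hρn : 0 < ρ ^ n := by positivity
  have hs : √V ^ 2 = V := Real.sq_sqrt hV.le
  have hs0 : 0 < √V := Real.sqrt_pos.2 hV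
  have hP : 0 ≤ 2 / √V / ρ ^ n * ε := by positivity
  have hQ : 0 ≤ 2 * Lip n d R * ρ * M := by positivity
  refine abs_le_of_sq_le_sq ?_ (by positivity)
  have h5 : F x ^ 2 ≤ 2 * ε ^ 2 / (ρ ^ n * V) + 2 * (Lip n d R * ρ * M) ^ 2 := by
    have : 0 < ρ ^ n * V := by positivity
    rw [← sub_le_iff_le_add, le_div_iff₀ this]
    linarith
  have h6 : 2 * ε ^ 2 / (ρ ^ n * V) ≤ (2 / √V / ρ ^ n * ε) ^ 2 := by
    rw [show (2 / √V / ρ ^ n * ε) ^ 2 = 4 * ε ^ 2 / (ρ ^ n * (ρ ^ n * √V ^ 2)) by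
      field_simp; ring, hs]
    have : ρ ^ n ≤ 1 := pow_le_one₀ hρ.le hρ1
    have : ρ ^ n * (ρ ^ n * V) ≤ 1 * (ρ ^ n * V) := by gcongr
    rw [one_mul] at this
    gcongr
    norm_num
  nlinarith [sq_nonneg (Lip n d R * ρ * M)]
end

/-! ### Nonlocal energies on convex sets -/

section
variable {n : ℕ}

lemma norm_gradient_eq (g : EuclideanSpace ℝ (Fin n) → ℝ) (x) : ‖gradient g x‖ = ‖fderiv ℝ g x‖ := by
  simp [gradient]

lemma measurable_grad (g : EuclideanSpace ℝ (Fin n) → ℝ) :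
    Measurable fun x => ENNReal.ofReal (‖gradient g x‖ ^ 2) := by
  simp only [norm_gradient_eq]
  exact (((measurable_fderiv ℝ g).norm).pow_const 2).ennreal_ofReal

/-- Squared increments are controlled by the energy of the gradient along the segment. -/
lemma sq_increment_le {g : EuclideanSpace ℝ (Fin n) → ℝ} (hg : Differentiable ℝ g)
    (y v : EuclideanSpace ℝ (Fin n)) :
    ENNReal.ofReal ((g (y + v) - g y) ^ 2) ≤
      ENNReal.ofReal (‖v‖ ^ 2) * ∫⁻ t in Ioc (0:ℝ) 1, ENNReal.ofReal (‖gradient g (y + t • v)‖ ^ 2) := by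
  by_cases hv : v = 0
  · simp [hv]
  have hv' : 0 < ‖v‖ := norm_pos_iff.2 hv
  set φ : ℝ → ℝ := fun t => ‖gradient g (y + t • v)‖ with hφ
  have hmeas : Measurable φ := by
    simp only [hφ, norm_gradient_eq]
    exact ((measurable_fderiv ℝ g).norm).comp (by fun_prop)
  by_cases hL : ∫⁻ t in Ioc (0:ℝ) 1, ENNReal.ofReal (φ t ^ 2) = ⊤
  · rw [hL, ENNReal.mul_top]
    · exact le_top
    · simpa using hv
  have h2 : IntegrableOn (fun t => φ t ^ 2) (Ioc (0:ℝ) 1) := by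
    refine ⟨(hmeas.pow_const 2).aestronglyMeasurable, ?_⟩
    rw [hasFiniteIntegral_iff_ofReal (Filter.Eventually.of_forall fun _ => sq_nonneg _)]
    exact lt_top_iff_ne_top.2 hL
  have h1 : IntegrableOn φ (Ioc (0:ℝ) 1) := by
    refine Integrable.mono' (h2.add (integrable_const (1:ℝ))) hmeas.aestronglyMeasurable
      (Filter.Eventually.of_forall fun t => ?_)
    rw [Real.norm_of_nonneg (norm_nonneg _)]
    simp only [Pi.add_apply]
    nlinarith [sq_nonneg (φ t - 1)]
  have hder : ∀ t : ℝ, HasDerivAt (fun t : ℝ => g (y + t • v)) (fderiv ℝ g (y + t • v) v) t := by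
    intro t
    have e1 : HasDerivAt (fun t : ℝ => y + t • v) v t := by
      simpa using ((hasDerivAt_id t).smul_const v).const_add y
    exact (hg (y + t • v)).hasFDerivAt.comp_hasDerivAt t e1
  have hbd : ∀ t, ‖fderiv ℝ g (y + t • v) v‖ ≤ ‖v‖ * φ t := by
    intro t
    rw [hφ]
    simp only [norm_gradient_eq]
    rw [mul_comm]
    exact ContinuousLinearMap.le_opNorm _ _
  have hmd : Measurable fun t : ℝ => fderiv ℝ g (y + t • v) v :=
    (measurable_fderiv_apply_const ℝ g v).comp (by fun_prop)
  have hdi : IntegrableOn (fun t : ℝ => fderiv ℝ g (y + t • v) v) (Ioc (0:ℝ) 1) :=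
    Integrable.mono' (h1.const_mul ‖v‖) hmd.aestronglyMeasurable (Filter.Eventually.of_forall hbd)
  have hftc := intervalIntegral.integral_eq_sub_of_hasDerivAt (a := 0) (b := 1) (fun t _ => hder t)
    ((intervalIntegrable_iff_integrableOn_Ioc_of_le zero_le_one).2 hdi)
  rw [intervalIntegral.integral_of_le zero_le_one] at hftc
  simp only [one_smul, zero_smul, add_zero] at hftc
  set a := ∫ t in Ioc (0:ℝ) 1, φ t with ha
  have hle : |g (y + v) - g y| ≤ ‖v‖ * a := by
    rw [← hftc, ← Real.norm_eq_abs, ha, ← integral_const_mul]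
    exact norm_integral_le_of_norm_le (h1.const_mul ‖v‖) (Filter.Eventually.of_forall hbd)
  have hj : a ^ 2 ≤ ∫ t in Ioc (0:ℝ) 1, φ t ^ 2 := by
    have h0 : 0 ≤ ∫ t in Ioc (0:ℝ) 1, (φ t ^ 2 + (-(2 * a) * φ t + a ^ 2)) :=
      integral_nonneg fun t => by
        have : φ t ^ 2 + (-(2 * a) * φ t + a ^ 2) = (φ t - a) ^ 2 := by ring
        simp only [this]
        exact sq_nonneg _
    have i1 : IntegrableOn (fun t => -(2 * a) * φ t) (Ioc (0:ℝ) 1) := h1.const_mul _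
    have i2 : IntegrableOn (fun _ : ℝ => a ^ 2) (Ioc (0:ℝ) 1) := integrable_const _
    have i3 : IntegrableOn (fun t => -(2 * a) * φ t + a ^ 2) (Ioc (0:ℝ) 1) := i1.add i2
    rw [integral_add h2 i3, integral_add i1 i2, integral_const_mul, ← ha] at h0
    simp at h0
    nlinarith
  have hfin : (g (y + v) - g y) ^ 2 ≤ ‖v‖ ^ 2 * ∫ t in Ioc (0:ℝ) 1, φ t ^ 2 := by
    calc (g (y + v) - g y) ^ 2 = |g (y + v) - g y| ^ 2 := (sq_abs _).symm
      _ ≤ (‖v‖ * a) ^ 2 := by gcongr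
      _ = ‖v‖ ^ 2 * a ^ 2 := by ring
      _ ≤ _ := by gcongr
  calc _ ≤ ENNReal.ofReal (‖v‖ ^ 2 * ∫ t in Ioc (0:ℝ) 1, φ t ^ 2) := ENNReal.ofReal_le_ofReal hfin
    _ = _ := by
      rw [ENNReal.ofReal_mul (by positivity),
        ofReal_integral_eq_lintegral_ofReal h2 (Filter.Eventually.of_forall fun _ => sq_nonneg _)]

/-- Nonlocal energies of a differentiable function on a convex set are controlled by its Dirichlet
energy: segments between points of the set stay inside, and the integral over all segments with a
given difference `v` sees each point at most once per parameter. -/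
lemma nonlocal_energy_le {Ω : Set (EuclideanSpace ℝ (Fin n))} (hm : MeasurableSet Ω)
    (hc : Convex ℝ Ω) {g : EuclideanSpace ℝ (Fin n) → ℝ} (hg : Differentiable ℝ g)
    {Φ : EuclideanSpace ℝ (Fin n) → ENNReal} (hΦ : Measurable Φ) :
    ∫⁻ y in Ω, ∫⁻ w in Ω, ENNReal.ofReal ((g w - g y) ^ 2) * Φ (w - y) ≤
      (∫⁻ v, ENNReal.ofReal (‖v‖ ^ 2) * Φ v) * ∫⁻ x in Ω, ENNReal.ofReal (‖gradient g x‖ ^ 2) := by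
  set V : EuclideanSpace ℝ (Fin n) → ENNReal :=
    Ω.indicator fun x => ENNReal.ofReal (‖gradient g x‖ ^ 2) with hV
  have hVm : Measurable V := (measurable_grad g).indicator hm
  set Ψ : EuclideanSpace ℝ (Fin n) → ENNReal := fun v => ENNReal.ofReal (‖v‖ ^ 2) * Φ v with hΨ
  have hΨm : Measurable Ψ := Measurable.mul (by fun_prop) hΦ
  have hpt : ∀ y ∈ Ω, ∀ w ∈ Ω, ENNReal.ofReal ((g w - g y) ^ 2) * Φ (w - y) ≤
      Ψ (w - y) * ∫⁻ t in Ioc (0:ℝ) 1, V (y + t • (w - y)) := by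
    intro y hy w hw
    have h1 := sq_increment_le hg y (w - y)
    rw [add_sub_cancel] at h1
    have h2 : ∫⁻ t in Ioc (0:ℝ) 1, ENNReal.ofReal (‖gradient g (y + t • (w - y))‖ ^ 2) =
        ∫⁻ t in Ioc (0:ℝ) 1, V (y + t • (w - y)) := by
      refine setLIntegral_congr_fun measurableSet_Ioc fun t ht => ?_
      have : y + t • (w - y) ∈ Ω := hc.add_smul_sub_mem hy hw ⟨ht.1.le, ht.2⟩
      simp only [hV, indicator_of_mem this]
    rw [h2] at h1
    calc _ ≤ (ENNReal.ofReal (‖w - y‖ ^ 2) * ∫⁻ t in Ioc (0:ℝ) 1, V (y + t • (w - y))) * Φ (w - y) := by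
          gcongr
      _ = _ := by rw [hΨ]; ring
  have hm3 : Measurable fun p : (EuclideanSpace ℝ (Fin n) × EuclideanSpace ℝ (Fin n)) × ℝ =>
      V (p.1.1 + p.2 • p.1.2) := hVm.comp (by fun_prop)
  calc _ ≤ ∫⁻ y in Ω, ∫⁻ w in Ω, Ψ (w - y) * ∫⁻ t in Ioc (0:ℝ) 1, V (y + t • (w - y)) :=
        setLIntegral_mono' hm fun y hy => setLIntegral_mono' hm fun w hw => hpt y hy w hw
    _ ≤ ∫⁻ y, ∫⁻ w, Ψ (w - y) * ∫⁻ t in Ioc (0:ℝ) 1, V (y + t • (w - y)) :=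
        (setLIntegral_le_lintegral _ _).trans (lintegral_mono fun y => setLIntegral_le_lintegral _ _)
    _ = ∫⁻ y, ∫⁻ v, Ψ v * ∫⁻ t in Ioc (0:ℝ) 1, V (y + t • v) := by
        refine lintegral_congr fun y => ?_
        exact lintegral_sub_right_eq_self (fun v => Ψ v * ∫⁻ t in Ioc (0:ℝ) 1, V (y + t • v)) y
    _ = ∫⁻ v, ∫⁻ y, Ψ v * ∫⁻ t in Ioc (0:ℝ) 1, V (y + t • v) := by
        refine lintegral_lintegral_swap (Measurable.aemeasurable ?_)
        exact (hΨm.comp measurable_snd).mul hm3.lintegral_prod_right'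
    _ = ∫⁻ v, Ψ v * ∫⁻ x, V x := by
        refine lintegral_congr fun v => ?_
        have hm2 : Measurable fun p : EuclideanSpace ℝ (Fin n) × ℝ => V (p.1 + p.2 • v) :=
          hVm.comp (by fun_prop)
        rw [lintegral_const_mul _ hm2.lintegral_prod_right',
          lintegral_lintegral_swap (f := fun y t => V (y + t • v)) hm2.aemeasurable]
        simp only [lintegral_add_right_eq_self (μ := volume) V]
        simp
    _ = _ := by
        rw [lintegral_mul_const _ hΨm, hV, lintegral_indicator hm]
end

/-! ### Mass and Gaussian decay of the kernel -/

section
variable {n : ℕ} {Ω : Set (EuclideanSpace ℝ (Fin n))} {x₀ : EuclideanSpace ℝ (Fin n)} {r d R : ℝ}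

lemma Geo.diam_le (G : Geo Ω x₀ r d R) {w y : EuclideanSpace ℝ (Fin n)} (hw : w ∈ Ω) (hy : y ∈ Ω) :
    ‖w - y‖ ≤ 2 * R := by
  have h1 := G.upper x₀ G.center w hw
  have h2 := G.upper x₀ G.center y hy
  rw [show w - y = (x₀ - y) - (x₀ - w) by abel]
  exact (norm_sub_le _ _).trans (by linarith)

lemma Geo.theta_le_one (G : Geo Ω x₀ r d R) {w y : EuclideanSpace ℝ (Fin n)} (hw : w ∈ Ω)
    (hy : y ∈ Ω) : theta x₀ d w y ≤ 1 := by
  have hd := G.d_pos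
  have h1 := G.lower x₀ G.center w hw
  have h2 := G.lower x₀ G.center y hy
  have h3 : ‖w - y‖ ≤ ‖x₀ - y‖ + ‖x₀ - w‖ := by
    rw [show w - y = (x₀ - y) - (x₀ - w) by abel]
    exact norm_sub_le _ _
  set a := ‖x₀ - w‖
  set b := ‖x₀ - y‖
  have ha : 0 < a := hd.trans_le h1
  have hb : 0 < b := hd.trans_le h2
  have h4 : d * ‖w - y‖ ≤ 2 * (a * b) := by
    calc d * ‖w - y‖ ≤ d * (b + a) := by gcongr
      _ = d * b + d * a := by ring
      _ ≤ a * b + b * a := by gcongr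
      _ = _ := by ring
  have h5 : (d * ‖w - y‖) ^ 2 ≤ (2 * (a * b)) ^ 2 := by gcongr
  unfold theta
  rw [← mul_div_assoc, div_le_one (by positivity)]
  nlinarith

lemma Geo.theta_lower (G : Geo Ω x₀ r d R) {w y : EuclideanSpace ℝ (Fin n)} (hw : w ∈ Ω)
    (hy : y ∈ Ω) : d ^ 2 / (4 * R ^ 4) * ‖w - y‖ ^ 2 ≤ theta x₀ d w y := by
  have hd := G.d_pos
  have h1 := G.upper x₀ G.center w hw
  have h2 := G.upper x₀ G.center y hy
  have p1 := G.sq_pos G.center hw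
  have p2 := G.sq_pos G.center hy
  unfold theta
  calc _ = d ^ 2 / 4 * (‖w - y‖ ^ 2 / (R ^ 2 * R ^ 2)) := by ring
    _ ≤ _ := by gcongr

lemma Geo.theta_upper (G : Geo Ω x₀ r d R) {w y : EuclideanSpace ℝ (Fin n)} (hw : w ∈ Ω)
    (hy : y ∈ Ω) : theta x₀ d w y ≤ ‖w - y‖ ^ 2 / (4 * d ^ 2) := by
  have hd := G.d_pos
  have h1 := G.lower x₀ G.center w hw
  have h2 := G.lower x₀ G.center y hy
  unfold theta
  calc _ ≤ d ^ 2 / 4 * (‖w - y‖ ^ 2 / (d ^ 2 * d ^ 2)) := by gcongr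
    _ = _ := by field_simp

lemma measurable_theta (x₀ : EuclideanSpace ℝ (Fin n)) (d : ℝ) :
    Measurable fun p : EuclideanSpace ℝ (Fin n) × EuclideanSpace ℝ (Fin n) => theta x₀ d p.1 p.2 := by
  unfold theta; fun_prop

lemma Geo.rpow_neg_ge (G : Geo Ω x₀ r d R) {y : EuclideanSpace ℝ (Fin n)} (hy : y ∈ Ω)
    {μ : ℝ} (hμ : 0 ≤ μ) : (R ^ 2) ^ (-μ) ≤ (‖x₀ - y‖ ^ 2) ^ (-μ) := by
  have hp := G.sq_pos G.center hy
  have := G.upper x₀ G.center y hy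
  exact Real.rpow_le_rpow_of_nonpos hp (by gcongr) (by linarith)

/-- The convex set `Ω` contains its copy shrunk by a factor `t` towards one of its points. -/
lemma homothety_image (hm : MeasurableSet Ω) (hc : Convex ℝ Ω) {w : EuclideanSpace ℝ (Fin n)}
    (hw : w ∈ Ω) {t : ℝ} (ht0 : 0 < t) (ht1 : t ≤ 1) :
    ∃ S ⊆ Ω, MeasurableSet S ∧ volume.real S = t ^ n * volume.real Ω ∧
      ∀ z ∈ S, ∃ y ∈ Ω, w - z = t • (w - y) := by
  set S := AffineMap.homothety w t '' Ω with hS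
  have hsub : S ⊆ Ω := by
    rintro _ ⟨y, hy, rfl⟩
    rw [AffineMap.homothety_apply, vsub_eq_sub, vadd_eq_add, add_comm]
    exact hc.add_smul_sub_mem hw hy ⟨ht0.le, ht1⟩
  have hSm : MeasurableSet S := by
    have : S = (fun z => w + t⁻¹ • (z - w)) ⁻¹' Ω := by
      ext z
      constructor
      · rintro ⟨y, hy, rfl⟩
        simp only [mem_preimage, AffineMap.homothety_apply, vsub_eq_sub, vadd_eq_add,
          add_sub_cancel_right, smul_smul, inv_mul_cancel₀ ht0.ne', one_smul]
        simpa using hy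
      · intro hz
        refine ⟨_, hz, ?_⟩
        simp only [AffineMap.homothety_apply, vsub_eq_sub, vadd_eq_add, add_sub_cancel_left,
          smul_smul, mul_inv_cancel₀ ht0.ne', one_smul, sub_add_cancel]
    rw [this]
    exact (by fun_prop : Measurable fun z : EuclideanSpace ℝ (Fin n) => w + t⁻¹ • (z - w)) hm
  refine ⟨S, hsub, hSm, ?_, ?_⟩
  · have h := Measure.addHaar_image_homothety volume w t Ω
    rw [finrank_euclideanSpace, Fintype.card_fin, abs_of_nonneg (by positivity)] at h
    rw [Measure.real, hS, h, ENNReal.toReal_mul, ENNReal.toReal_ofReal (by positivity), Measure.real]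
  · rintro _ ⟨y, hy, rfl⟩
    refine ⟨y, hy, ?_⟩
    rw [AffineMap.homothety_apply, vsub_eq_sub, vadd_eq_add, smul_sub, smul_sub]
    abel

/-- The kernel `(1 - theta)^N` has mass of order at least `N^(-n/2)`: the copy of `Ω` shrunk by a factor
of order `N^(-1/2)` towards `w` stays in `Ω`, and there `theta ≤ 1 / (4N)`. -/
lemma Geo.mass (G : Geo Ω x₀ r d R) (hc : Convex ℝ Ω) (hfin : volume Ω < ⊤) {μ : ℝ} (hμ : 0 ≤ μ)
    {N : ℕ} (hN : 1 ≤ N) {w : EuclideanSpace ℝ (Fin n)} (hw : w ∈ Ω) :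
    1 / 2 * (R ^ 2) ^ (-μ) * (d / (2 * R)) ^ n * volume.real Ω / √N ^ n ≤
      ∫ y in Ω, (‖x₀ - y‖ ^ 2) ^ (-μ) * (1 - theta x₀ d w y) ^ N := by
  have hd := G.d_pos
  have hR := G.R_ge
  have hN0 : (1:ℝ) ≤ N := by exact_mod_cast hN
  have hs1 : 1 ≤ √(N:ℝ) := Real.one_le_sqrt.2 hN0
  set t : ℝ := d / (2 * R) / √N with ht
  have ht0 : 0 < t := by positivity
  have ht1 : t ≤ 1 := by
    rw [ht, div_div, div_le_one (by positivity)]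
    nlinarith [G.d_le]
  obtain ⟨S, hsub, hSm, hSv, hSz⟩ := homothety_image G.meas hc hw ht0 ht1
  have hkm : Measurable fun y => (‖x₀ - y‖ ^ 2) ^ (-μ) * (1 - theta x₀ d w y) ^ N := by
    have h1 : Measurable fun y => theta x₀ d w y := by unfold theta; fun_prop
    have h2 : Measurable fun y => (‖x₀ - y‖ ^ 2) ^ (-μ) := Measurable.pow_const (by fun_prop) _
    fun_prop
  have hk0 : ∀ y ∈ Ω, 0 ≤ (‖x₀ - y‖ ^ 2) ^ (-μ) * (1 - theta x₀ d w y) ^ N := by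
    intro y hy
    have := G.theta_le_one hw hy
    have : 0 ≤ 1 - theta x₀ d w y := by linarith
    positivity
  have hki : IntegrableOn (fun y => (‖x₀ - y‖ ^ 2) ^ (-μ) * (1 - theta x₀ d w y) ^ N) Ω := by
    refine IntegrableOn.of_bound hfin hkm.aestronglyMeasurable ((2 / d ^ 2) ^ μ) (G.ae fun y hy => ?_)
    rw [Real.norm_of_nonneg (hk0 y hy)]
    have h1 := G.rpow_neg_le G.center hy hμ
    have h2 := G.theta_le_one hw hy
    have h3 := theta_nonneg x₀ d w y
    have h4 : (1 - theta x₀ d w y) ^ N ≤ 1 := pow_le_one₀ (by linarith) (by linarith)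
    calc _ ≤ (2 / d ^ 2) ^ μ * 1 := by gcongr
      _ = _ := mul_one _
  have hpt : ∀ z ∈ S, (R ^ 2) ^ (-μ) * (1 / 2) ≤ (‖x₀ - z‖ ^ 2) ^ (-μ) * (1 - theta x₀ d w z) ^ N := by
    intro z hz
    have hzΩ := hsub hz
    obtain ⟨y, hy, e⟩ := hSz z hz
    have h1 := G.theta_upper hw hzΩ
    have h2 := G.theta_le_one hw hzΩ
    have h4 := G.rpow_neg_ge hzΩ hμ
    have h3 : ‖w - z‖ ^ 2 ≤ d ^ 2 / N := by
      rw [e, norm_smul, Real.norm_of_nonneg ht0.le]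
      have := G.diam_le hw hy
      calc (t * ‖w - y‖) ^ 2 ≤ (t * (2 * R)) ^ 2 := by gcongr
        _ = d ^ 2 / √N ^ 2 := by rw [ht]; field_simp
        _ = _ := by rw [Real.sq_sqrt (by linarith)]
    have h5 : N * theta x₀ d w z ≤ 1 / 2 := by
      calc N * theta x₀ d w z ≤ N * (‖w - z‖ ^ 2 / (4 * d ^ 2)) := by gcongr
        _ ≤ N * (d ^ 2 / N / (4 * d ^ 2)) := by gcongr
        _ = 1 / 4 := by field_simp
        _ ≤ _ := by norm_num
    have h6 := one_add_mul_le_pow (a := -theta x₀ d w z) (by linarith) N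
    have h7 : 1 / 2 ≤ (1 - theta x₀ d w z) ^ N := by
      rw [sub_eq_add_neg]; linarith
    gcongr
  calc _ = (R ^ 2) ^ (-μ) * (1 / 2) * volume.real S := by
        rw [hSv, ht, div_pow _ √(N : ℝ) n]; ring
    _ = ∫ y in S, (R ^ 2) ^ (-μ) * (1 / 2) := by rw [setIntegral_const, smul_eq_mul]; ring
    _ ≤ ∫ y in S, (‖x₀ - y‖ ^ 2) ^ (-μ) * (1 - theta x₀ d w y) ^ N :=
        setIntegral_mono_on (integrableOn_const ((measure_mono hsub).trans_lt hfin).ne)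
          (hki.mono_set hsub) hSm hpt
    _ ≤ _ := setIntegral_mono_set hki (G.ae hk0) hsub.eventuallyLE

/-- Second moment of a Gaussian, through `b |v|² ≤ exp (b |v|²)`. -/
lemma gauss_moment {b : ℝ} (hb : 0 < b) {A : ℝ} (hA : 0 ≤ A) :
    ∫⁻ v : EuclideanSpace ℝ (Fin n), ENNReal.ofReal (‖v‖ ^ 2) *
        ENNReal.ofReal (A * Real.exp (-(2 * b * ‖v‖ ^ 2))) ≤
      ENNReal.ofReal (A / b * (Real.pi / b) ^ ((n : ℝ) / 2)) := by
  have hI := GaussianFourier.integral_rexp_neg_mul_sq_norm (V := EuclideanSpace ℝ (Fin n)) hb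
  rw [finrank_euclideanSpace, Fintype.card_fin] at hI
  have hInt : Integrable fun v : EuclideanSpace ℝ (Fin n) => Real.exp (-b * ‖v‖ ^ 2) := by
    refine Integrable.of_integral_ne_zero ?_
    rw [hI]; positivity
  calc _ ≤ ∫⁻ v : EuclideanSpace ℝ (Fin n), ENNReal.ofReal (A / b * Real.exp (-b * ‖v‖ ^ 2)) := by
        refine lintegral_mono fun v => ?_
        simp only
        rw [← ENNReal.ofReal_mul (by positivity)]
        refine ENNReal.ofReal_le_ofReal ?_
        have h1 : b * ‖v‖ ^ 2 ≤ Real.exp (b * ‖v‖ ^ 2) := by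
          linarith [Real.add_one_le_exp (b * ‖v‖ ^ 2)]
        have h2 : b * ‖v‖ ^ 2 * Real.exp (-(2 * b * ‖v‖ ^ 2)) ≤ Real.exp (-b * ‖v‖ ^ 2) := by
          calc _ ≤ Real.exp (b * ‖v‖ ^ 2) * Real.exp (-(2 * b * ‖v‖ ^ 2)) := by gcongr
            _ = _ := by rw [← Real.exp_add]; congr 1; ring
        calc _ = A / b * (b * ‖v‖ ^ 2 * Real.exp (-(2 * b * ‖v‖ ^ 2))) := by field_simp
          _ ≤ _ := by gcongr
    _ = _ := by
      rw [← ofReal_integral_eq_lintegral_ofReal (hInt.const_mul _)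
        (Filter.Eventually.of_forall fun _ => by positivity), integral_const_mul, hI]
end

/-! ### The energy argument -/

section
variable {n : ℕ} {Ω : Set (EuclideanSpace ℝ (Fin n))} {x₀ : EuclideanSpace ℝ (Fin n)} {r d R : ℝ}

/-- The symmetric kernel `|x₀-w|^(-2μ) |x₀-y|^(-2μ) (1 - theta)^N` of the energy argument. -/
noncomputable def pker (x₀ : EuclideanSpace ℝ (Fin n)) (d μ : ℝ) (N : ℕ)
    (w y : EuclideanSpace ℝ (Fin n)) : ℝ :=
  (‖x₀ - w‖ ^ 2) ^ (-μ) * ((‖x₀ - y‖ ^ 2) ^ (-μ) * (1 - theta x₀ d w y) ^ N)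

lemma Geo.pker_nonneg (G : Geo Ω x₀ r d R) {w y : EuclideanSpace ℝ (Fin n)} (hw : w ∈ Ω)
    (hy : y ∈ Ω) (μ : ℝ) (N : ℕ) : 0 ≤ pker x₀ d μ N w y := by
  have := G.theta_le_one hw hy
  have : 0 ≤ 1 - theta x₀ d w y := by linarith
  unfold pker; positivity

/-- Gaussian decay of the kernel, from `1 - theta ≤ exp (-theta)` and the lower bound on `theta`. -/
lemma Geo.pker_le (G : Geo Ω x₀ r d R) {w y : EuclideanSpace ℝ (Fin n)} (hw : w ∈ Ω)
    (hy : y ∈ Ω) {μ : ℝ} (hμ : 0 ≤ μ) (N : ℕ) : pker x₀ d μ N w y ≤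
      (2 / d ^ 2) ^ μ * (2 / d ^ 2) ^ μ *
        Real.exp (-(2 * (N * (d ^ 2 / (8 * R ^ 4))) * ‖w - y‖ ^ 2)) := by
  have h1 := G.rpow_neg_le G.center hy hμ
  have h1' := G.rpow_neg_le G.center hw hμ
  have h2 := G.theta_le_one hw hy
  have h3 := G.theta_lower hw hy
  have h4 : (1 - theta x₀ d w y) ^ N ≤ Real.exp (-(2 * (N * (d ^ 2 / (8 * R ^ 4))) * ‖w - y‖ ^ 2)) := by
    calc (1 - theta x₀ d w y) ^ N ≤ Real.exp (-theta x₀ d w y) ^ N := by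
          have := Real.add_one_le_exp (-theta x₀ d w y)
          exact pow_le_pow_left₀ (by linarith) (by linarith) N
      _ = Real.exp (-(N * theta x₀ d w y)) := by rw [← Real.exp_nat_mul]; congr 1; ring
      _ ≤ _ := by
        refine Real.exp_le_exp.2 (neg_le_neg ?_)
        calc _ = N * (d ^ 2 / (4 * R ^ 4) * ‖w - y‖ ^ 2) := by ring
          _ ≤ _ := by gcongr
  have : 0 ≤ 1 - theta x₀ d w y := by linarith
  unfold pker
  rw [mul_assoc]
  gcongr

lemma measurable_pker (x₀ : EuclideanSpace ℝ (Fin n)) (d μ : ℝ) (N : ℕ) :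
    Measurable fun p : EuclideanSpace ℝ (Fin n) × EuclideanSpace ℝ (Fin n) =>
      pker x₀ d μ N p.1 p.2 := by
  have h1 := measurable_theta x₀ d
  have h2 : Measurable fun p : EuclideanSpace ℝ (Fin n) × EuclideanSpace ℝ (Fin n) =>
    (‖x₀ - p.1‖ ^ 2) ^ (-μ) := Measurable.pow_const (by fun_prop) _
  have h3 : Measurable fun p : EuclideanSpace ℝ (Fin n) × EuclideanSpace ℝ (Fin n) =>
    (‖x₀ - p.2‖ ^ 2) ^ (-μ) := Measurable.pow_const (by fun_prop) _
  unfold pker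
  fun_prop

lemma Geo.ae_prod (G : Geo Ω x₀ r d R)
    {P : EuclideanSpace ℝ (Fin n) × EuclideanSpace ℝ (Fin n) → Prop}
    (h : ∀ w ∈ Ω, ∀ y ∈ Ω, P (w, y)) :
    ∀ᵐ p ∂((volume.restrict Ω).prod (volume.restrict Ω)), P p := by
  rw [Measure.prod_restrict]
  exact (ae_restrict_iff' (G.meas.prod G.meas)).2
    (Filter.Eventually.of_forall fun p hp => h p.1 hp.1 p.2 hp.2)

/-- If all the integrals `∫ g(y) |x₀-y|^(-2μ) (1-θ(w,y))^N dy` are small, then the `L²` norm of `g` is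
dominated by its Dirichlet energy, up to a factor `1 / N`. The identity
`2 a b = a² + b² - (a - b)²` is integrated against the kernel `pker`. -/
lemma Geo.energy (G : Geo Ω x₀ r d R) (hc : Convex ℝ Ω) (hfin : volume Ω < ⊤) {μ : ℝ} (hμ : 0 ≤ μ)
    {N : ℕ} (hN : 1 ≤ N) {g : EuclideanSpace ℝ (Fin n) → ℝ} (hg : Differentiable ℝ g)
    (hg2 : IntegrableOn (fun x => g x ^ 2) Ω)
    (hG2 : IntegrableOn (fun x => ‖gradient g x‖ ^ 2) Ω) {e : ℝ}
    (he : ∀ w ∈ Ω, |∫ y in Ω, g y * ((‖x₀ - y‖ ^ 2) ^ (-μ) * (1 - theta x₀ d w y) ^ N)| ≤ e) :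
    (R ^ 2) ^ (-μ) * (1 / 2 * (R ^ 2) ^ (-μ) * (d / (2 * R)) ^ n * volume.real Ω / √N ^ n) *
        (∫ x in Ω, g x ^ 2) -
      (2 / d ^ 2) ^ μ * (2 / d ^ 2) ^ μ / (N * (d ^ 2 / (8 * R ^ 4))) *
        (Real.pi / (N * (d ^ 2 / (8 * R ^ 4)))) ^ ((n : ℝ) / 2) * (∫ x in Ω, ‖gradient g x‖ ^ 2) ≤
      2 * ((2 / d ^ 2) ^ μ * e * ∫ x in Ω, |g x|) := by
  have hd := G.d_pos
  have hR := G.R_ge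
  have hN0 : (1:ℝ) ≤ N := by exact_mod_cast hN
  set ν := volume.restrict Ω with hν
  have : IsFiniteMeasure ν := ⟨by rw [hν, Measure.restrict_apply_univ]; exact hfin⟩
  set K : EuclideanSpace ℝ (Fin n) × EuclideanSpace ℝ (Fin n) → ℝ := fun p => pker x₀ d μ N p.1 p.2
  have hKm : Measurable K := measurable_pker x₀ d μ N
  set A := (2 / d ^ 2) ^ μ * (2 / d ^ 2) ^ μ
  have hA : 0 ≤ A := by positivity
  have hKb : ∀ᵐ p ∂(ν.prod ν), ‖K p‖ ≤ A := by
    refine G.ae_prod fun w hw y hy => ?_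
    rw [Real.norm_of_nonneg (G.pker_nonneg hw hy μ N)]
    refine (G.pker_le hw hy hμ N).trans ?_
    have : Real.exp (-(2 * (N * (d ^ 2 / (8 * R ^ 4))) * ‖w - y‖ ^ 2)) ≤ 1 :=
      Real.exp_le_one_iff.2 (neg_nonpos.2 (by positivity))
    calc _ ≤ A * 1 := by gcongr
      _ = A := mul_one A
  have hgi : Integrable g ν := by
    refine Integrable.mono' (hg2.add (integrable_const (1:ℝ))) hg.continuous.aestronglyMeasurable
      (Filter.Eventually.of_forall fun t => ?_)
    simp only [Pi.add_apply, Real.norm_eq_abs]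
    nlinarith [sq_nonneg (|g t| - 1), sq_abs (g t)]
  have i1 : Integrable (fun p : EuclideanSpace ℝ (Fin n) × EuclideanSpace ℝ (Fin n) =>
      g p.1 * g p.2 * K p) (ν.prod ν) := (hgi.mul_prod hgi).mul_bdd hKm.aestronglyMeasurable hKb
  have i2 : Integrable (fun p : EuclideanSpace ℝ (Fin n) × EuclideanSpace ℝ (Fin n) =>
      g p.1 ^ 2 * K p) (ν.prod ν) :=
    (hg2.comp_fst ν).mul_bdd hKm.aestronglyMeasurable hKb
  have i2' : Integrable (fun p : EuclideanSpace ℝ (Fin n) × EuclideanSpace ℝ (Fin n) =>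
      g p.2 ^ 2 * K p) (ν.prod ν) :=
    (hg2.comp_snd ν).mul_bdd hKm.aestronglyMeasurable hKb
  have i3 : Integrable (fun p : EuclideanSpace ℝ (Fin n) × EuclideanSpace ℝ (Fin n) =>
      (g p.1 - g p.2) ^ 2 * K p) (ν.prod ν) := by
    refine ((i2.sub (i1.const_mul 2)).add i2').congr (Filter.Eventually.of_forall fun p => ?_)
    simp only [Pi.add_apply, Pi.sub_apply]
    ring
  have h1 : ∫ p, g p.1 ^ 2 * K p ∂(ν.prod ν) - ∫ p, (g p.1 - g p.2) ^ 2 * K p ∂(ν.prod ν) ≤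
      2 * ∫ p, g p.1 * g p.2 * K p ∂(ν.prod ν) := by
    rw [← integral_sub i2 i3, ← integral_const_mul]
    refine integral_mono_ae (i2.sub i3) (i1.const_mul 2) (G.ae_prod fun w hw y hy => ?_)
    have := G.pker_nonneg hw hy μ N
    have h0 : 0 ≤ g y ^ 2 * K (w, y) := by positivity
    simp only
    nlinarith
  -- integrating out `y`, the kernel has mass of order at least `N^(-n/2)`
  have h2 : (R ^ 2) ^ (-μ) * (1 / 2 * (R ^ 2) ^ (-μ) * (d / (2 * R)) ^ n * volume.real Ω / √N ^ n) *
        (∫ x in Ω, g x ^ 2) ≤ ∫ p, g p.1 ^ 2 * K p ∂(ν.prod ν) := by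
    rw [integral_prod _ i2, ← integral_const_mul]
    refine integral_mono_ae (hg2.const_mul _) i2.integral_prod_left (G.ae fun w hw => ?_)
    have h3 := G.mass hc hfin hμ hN hw
    have h4 := G.rpow_neg_ge hw hμ
    simp only [K, pker]
    rw [integral_const_mul, integral_const_mul, mul_comm _ (g w ^ 2)]
    gcongr
  -- Gaussian decay of the kernel reduces the increments to the Dirichlet energy
  have h3 : ∫ p, (g p.1 - g p.2) ^ 2 * K p ∂(ν.prod ν) ≤ A / (N * (d ^ 2 / (8 * R ^ 4))) *
        (Real.pi / (N * (d ^ 2 / (8 * R ^ 4)))) ^ ((n : ℝ) / 2) * (∫ x in Ω, ‖gradient g x‖ ^ 2) := by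
    set b := N * (d ^ 2 / (8 * R ^ 4)) with hb
    have hb0 : 0 < b := by positivity
    have hE : 0 ≤ ∫ x in Ω, ‖gradient g x‖ ^ 2 := integral_nonneg fun _ => sq_nonneg _
    rw [← ENNReal.ofReal_le_ofReal_iff (by positivity), ofReal_integral_eq_lintegral_ofReal i3
      (G.ae_prod fun w hw y hy => mul_nonneg (sq_nonneg _) (G.pker_nonneg hw hy μ N)),
      ENNReal.ofReal_mul (by positivity), ofReal_integral_eq_lintegral_ofReal hG2
      (Filter.Eventually.of_forall fun _ => sq_nonneg _)]
    have hgc := hg.continuous.measurable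
    rw [lintegral_prod_symm' _ (by fun_prop)]
    set Φ : EuclideanSpace ℝ (Fin n) → ENNReal := fun v => ENNReal.ofReal (A * Real.exp (-(2 * b * ‖v‖ ^ 2)))
      with hΦ
    calc _ ≤ ∫⁻ y in Ω, ∫⁻ w in Ω, ENNReal.ofReal ((g w - g y) ^ 2) * Φ (w - y) := by
          refine setLIntegral_mono' G.meas fun y hy => setLIntegral_mono' G.meas fun w hw => ?_
          rw [ENNReal.ofReal_mul (sq_nonneg _)]
          gcongr
          exact ENNReal.ofReal_le_ofReal (G.pker_le hw hy hμ N)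
      _ ≤ (∫⁻ v, ENNReal.ofReal (‖v‖ ^ 2) * Φ v) * ∫⁻ x in Ω, ENNReal.ofReal (‖gradient g x‖ ^ 2) :=
          nonlocal_energy_le G.meas hc hg (by fun_prop)
      _ ≤ _ := by
          gcongr
          exact gauss_moment hb0 hA
  -- by Fubini, the mixed term is an average over `w` of the integrals in `he`
  have h4 : ∫ p, g p.1 * g p.2 * K p ∂(ν.prod ν) ≤ (2 / d ^ 2) ^ μ * e * ∫ x in Ω, |g x| := by
    rw [integral_prod _ i1]
    have e1 : ∫ w, ∫ y, g w * g y * K (w, y) ∂ν ∂ν = ∫ w in Ω, g w * ((‖x₀ - w‖ ^ 2) ^ (-μ) *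
        ∫ y in Ω, g y * ((‖x₀ - y‖ ^ 2) ^ (-μ) * (1 - theta x₀ d w y) ^ N)) := by
      congr 1; ext w
      rw [← mul_assoc, ← integral_const_mul]
      congr 1; ext y
      simp only [K, pker]; ring
    rw [e1]
    refine (le_abs_self _).trans (abs_integral_mul_le hgi (G.ae fun w hw => ?_))
    have := G.rpow_neg_le G.center hw hμ
    rw [abs_mul, abs_of_nonneg (by positivity : 0 ≤ (‖x₀ - w‖ ^ 2) ^ (-μ))]
    exact mul_le_mul this (he w hw) (abs_nonneg _) (by positivity)
  linarith
end

/-! ### The estimate at scale `N` -/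

section
variable {n : ℕ} {Ω Ω₁ : Set (EuclideanSpace ℝ (Fin n))} {x₀ : EuclideanSpace ℝ (Fin n)} {r d R : ℝ}

lemma integrable_of_sq (hfin : volume Ω < ⊤) {g : EuclideanSpace ℝ (Fin n) → ℝ}
    (hg : Differentiable ℝ g) (hg2 : IntegrableOn (fun x => g x ^ 2) Ω) : IntegrableOn g Ω := by
  have : IsFiniteMeasure (volume.restrict Ω) := ⟨by rw [Measure.restrict_apply_univ]; exact hfin⟩
  refine Integrable.mono' (hg2.add (integrable_const (1:ℝ))) hg.continuous.aestronglyMeasurable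
    (Filter.Eventually.of_forall fun t => ?_)
  simp only [Pi.add_apply, Real.norm_eq_abs]
  nlinarith [sq_nonneg (|g t| - 1), sq_abs (g t)]

/-- Cauchy-Schwarz, by expanding `∫ (|g| - M / v)² ≥ 0`. -/
lemma integral_abs_le (hfin : volume Ω < ⊤) (hv : 0 < volume.real Ω)
    {g : EuclideanSpace ℝ (Fin n) → ℝ} (hg : Differentiable ℝ g)
    (hg2 : IntegrableOn (fun x => g x ^ 2) Ω) :
    ∫ x in Ω, |g x| ≤ √(volume.real Ω) * √(∫ x in Ω, g x ^ 2) := by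
  have hgi := (integrable_of_sq hfin hg hg2).abs
  set v := volume.real Ω
  set M := ∫ x in Ω, |g x| with hM
  have h0 : 0 ≤ ∫ x in Ω, (g x ^ 2 + (-(2 * (M / v)) * |g x| + (M / v) ^ 2)) :=
    integral_nonneg fun t => by
      have : g t ^ 2 + (-(2 * (M / v)) * |g t| + (M / v) ^ 2) = (|g t| - M / v) ^ 2 := by
        rw [← sq_abs (g t)]; ring
      simp only [this]
      exact sq_nonneg _
  have i1 : IntegrableOn (fun t => -(2 * (M / v)) * |g t|) Ω := hgi.const_mul _
  have i2 : IntegrableOn (fun _ : EuclideanSpace ℝ (Fin n) => (M / v) ^ 2) Ω :=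
    integrableOn_const hfin.ne
  have i3 : IntegrableOn (fun t => -(2 * (M / v)) * |g t| + (M / v) ^ 2) Ω := i1.add i2
  rw [integral_add hg2 i3, integral_add i1 i2, integral_const_mul, setIntegral_const, smul_eq_mul] at h0
  change 0 ≤ _ + (-(2 * (M / v)) * M + v * (M / v) ^ 2) at h0
  have e : -(2 * (M / v)) * M + v * (M / v) ^ 2 = -(M ^ 2 / v) := by field_simp; ring
  rw [e] at h0
  rw [← Real.sqrt_mul hv.le]
  refine Real.le_sqrt_of_sq_le ?_
  have : M ^ 2 / v ≤ ∫ x in Ω, g x ^ 2 := by linarith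
  rw [div_le_iff₀ hv] at this
  linarith

set_option maxHeartbeats 1600000 in
/-- Quantitative unique continuation at frequency scale `N`: a function whose squared Rayleigh
quotient is at most a multiple of `N` is controlled by its Riesz transforms on `Ω₁`, with a constant
of moderate growth in `N`. -/
lemma Geo.main (G : Geo Ω x₀ r d R) (hn : 1 ≤ n) (hc : Convex ℝ Ω) (hfin : volume Ω < ⊤)
    (hv : 0 < volume.real Ω) (ho : IsOpen Ω₁) (hb : Bornology.IsBounded Ω₁)
    (hsub : Metric.closedBall x₀ r ⊆ Ω₁) (hl : ∀ x ∈ Ω₁, ∀ y ∈ Ω, d ≤ ‖x - y‖)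
    (hu : ∀ x ∈ Ω₁, ∀ y ∈ Ω, ‖x - y‖ ≤ R) :
    ∃ C₀ : ℝ, 0 < C₀ ∧ ∃ W : ℕ → ℝ, Moderate W ∧ ∀ N : ℕ, 1 ≤ N →
      ∀ g : EuclideanSpace ℝ (Fin n) → ℝ, Differentiable ℝ g →
        IntegrableOn (fun x => g x ^ 2) Ω → IntegrableOn (fun x => ‖gradient g x‖ ^ 2) Ω →
        0 < ∫ x in Ω, g x ^ 2 →
        C₀ * (∫ x in Ω, ‖gradient g x‖ ^ 2) ≤ N * ∫ x in Ω, g x ^ 2 →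
        √(∫ x in Ω, g x ^ 2) ≤ W N * √(∑ j, ∫ x in Ω₁, truncRiesz n Ω j g x ^ 2) := by
  have hd := G.d_pos
  have hR := G.R_ge
  have hr := G.r_pos
  have hr1 := G.r_le
  set μ : ℝ := ((n : ℝ) + 1) / 2 with hμ
  have hμ0 : 0 ≤ μ := by positivity
  set v := volume.real Ω with hvd
  set κ := (2 / d ^ 2) ^ μ
  set q := d ^ 2 / (8 * R ^ 4) with hq
  have hq0 : 0 < q := by positivity
  set c₁ := (R ^ 2) ^ (-μ) * (1 / 2 * (R ^ 2) ^ (-μ) * (d / (2 * R)) ^ n * v) with hc₁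
  set c₂ := κ * κ / q * (Real.pi / q) ^ ((n : ℝ) / 2) with hc₂
  have hκ : 0 < κ := by positivity
  have hc₁0 : 0 < c₁ := by positivity
  have hc₂0 : 0 < c₂ := by positivity
  have hL := Lip_nonneg n hd (by linarith : 0 ≤ R)
  set V := volume.real (Metric.ball (0 : EuclideanSpace ℝ (Fin n)) 1)
  have hV : 0 < V := ENNReal.toReal_pos (Metric.measure_ball_pos _ _ one_pos).ne' measure_ball_lt_top.ne
  set C₁ := 2 / √V / (r / 2) ^ n with hC₁
  have hC₁0 : 0 < C₁ := by positivity
  set C₂ := Lip n d R * r + 1 with hC₂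
  have hC₂0 : 0 < C₂ := by positivity
  have hBc : ∀ N, 0 ≤ Bcond r d R N := fun N => by unfold Bcond; positivity
  have hBm : ∀ N, 0 ≤ Bmom n d R N := fun N => by
    have := one_le_Qc (N + 1)
    have := one_le_Qc (2 * (5 * N + 4) + 1)
    have := G.one_le_Ebig (n := n) (2 * N + 1) (5 * N + 4)
    unfold Bmom Biter
    positivity
  set U : ℕ → ℝ := fun N => Bcond r d R N + Bmom n d R N with hU
  have hUm : Moderate U := moderate_consts n hd
  set T : ℕ → ℝ := fun N => 4 * κ * √v / c₁ * (N : ℝ) ^ n * 3 ^ N * U N with hT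
  have hTm : Moderate T := by
    have h1 := (Moderate.linear 1 0).pow_lin 0 n
    have h2 := (Moderate.const 3).pow_lin 1 0
    refine ((((Moderate.const (4 * κ * √v / c₁)).mul h1).mul h2).mul hUm).congr fun N => ?_
    simp [hT]
  set W : ℕ → ℝ := fun N => 1 + U N + 2 * C₂ * √v * T N with hW
  have hWm : Moderate W := by
    exact ((Moderate.const 1).add hUm).add ((Moderate.const (2 * C₂ * √v)).mul hTm)
  refine ⟨2 * c₂ / c₁, by positivity,
    fun N => 2 * C₁ * T N * W N ^ ((5 * (n + 1)) * N + 4 * (n + 1)),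
    ((Moderate.const (2 * C₁)).mul hTm).mul (hWm.pow_lin _ _), ?_⟩
  intro N hN g hg hg2 hG2 hpos hNE
  have hN0 : (1:ℝ) ≤ N := by exact_mod_cast hN
  have hU0 : 0 ≤ U N := add_nonneg (hBc N) (hBm N)
  have hT0 : 0 ≤ T N := by simp only [hT]; positivity
  have hW1 : 1 ≤ W N := by
    have : 0 ≤ 2 * C₂ * √v * T N := by positivity
    simp only [hW]; linarith
  have hW0 : 0 < W N := by linarith
  -- the step is small enough to absorb the term proportional to `‖g‖_{L²}` in `h8` below
  set h := (W N)⁻¹ with hh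
  have hh0 : 0 < h := by positivity
  have hh1 : h ≤ 1 := inv_le_one_of_one_le₀ hW1
  have hgi := integrable_of_sq hfin hg hg2
  have hM := integral_abs_le hfin hv hg hg2
  set M := ∫ x in Ω, |g x|
  have hM0 : 0 ≤ M := integral_nonneg fun _ => abs_nonneg _
  set ε := √(∑ j, ∫ x in Ω₁, truncRiesz n Ω j g x ^ 2) with hε
  have hε0 : 0 ≤ ε := Real.sqrt_nonneg _
  have hεj : ∀ j, ∫ x in Ω₁, truncRiesz n Ω j g x ^ 2 ≤ ε ^ 2 := by
    intro j
    have hnn : ∀ j ∈ Finset.univ, 0 ≤ ∫ x in Ω₁, truncRiesz n Ω j g x ^ 2 :=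
      fun j _ => integral_nonneg fun _ => sq_nonneg _
    rw [hε, Real.sq_sqrt (Finset.sum_nonneg hnn)]
    exact Finset.single_le_sum hnn (Finset.mem_univ j)
  set P := h ^ (5 * N + 4) with hP
  have hP0 : 0 < P := by positivity
  have hP1 : P ≤ 1 := pow_le_one₀ hh0.le hh1
  have hPr : P * (r / 2) ≤ r / 2 := mul_le_of_le_one_left (by positivity) hP1
  -- the Lipschitz error at scale `P r / 2` is comparable to the expansion error `P = h^(5N+4)`
  set η := 2 / √V / (P * (r / 2)) ^ n * ε + 2 * Lip n d R * (P * (r / 2)) * M with hη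
  have hpt : ∀ j, ∀ x ∈ Metric.closedBall x₀ (r / 2),
      |∫ y in Ω, g y * ((‖x - y‖ ^ 2) ^ (-(((n : ℝ) + 1) / 2)) * (x j - y j))| ≤ η := by
    intro j x hx
    rw [← truncRiesz_eq_rpow]
    refine truncRiesz_pointwise hd (by linarith) ho hb G.meas hgi hl hu j (by positivity)
      (by linarith) ?_ hε0 (hεj j)
    refine Subset.trans ?_ hsub
    refine Metric.ball_subset_closedBall.trans (Metric.closedBall_subset_closedBall' ?_)
    have := Metric.mem_closedBall.1 hx
    linarith
  have hBh : Bcond r d R N * h ≤ 1 := by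
    rw [hh, ← div_eq_mul_inv, div_le_one hW0]
    have : 0 ≤ 2 * C₂ * √v * T N := by positivity
    have := hBm N
    simp only [hW, hU]; linarith
  set e := U N * (C₁ / P ^ (n + 1) * ε + C₂ * h * M) with he
  have hmom : ∀ ξ : EuclideanSpace ℝ (Fin n), ‖ξ‖ ≤ 1 → ∀ b ≤ N, ∀ k ≤ N,
      |∫ y in Ω, g y * ((‖x₀ - y‖ ^ 2) ^ (-(μ + b)) * zet x₀ ξ y ^ k)| ≤ e := by
    intro ξ hξ b hb k hk
    have h1 := G.moments hn N hh0 hBh hgi hpt hb hk hξ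
    set I := |∫ y in Ω, g y * ((‖x₀ - y‖ ^ 2) ^ (-(μ + b)) * zet x₀ ξ y ^ k)|
    have h2 : P * I ≤ P * e := by
      calc P * I = h * (h ^ (5 * N + 3) * I) := by rw [hP, pow_succ]; ring
        _ ≤ h * (Bmom n d R N * (η + P * M)) := by gcongr
        _ ≤ h * (U N * (η + P * M)) := by
          have : Bmom n d R N ≤ U N := by simp only [hU]; linarith [hBc N]
          have : 0 ≤ η + P * M := by positivity
          gcongr
        _ = U N * (h * (C₁ / P ^ n * ε) + P * (C₂ * h * M)) := by
          rw [hη, hC₁, hC₂, mul_pow]; field_simp; ring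
        _ ≤ U N * (1 * (C₁ / P ^ n * ε) + P * (C₂ * h * M)) := by gcongr
        _ = P * e := by rw [he]; field_simp; ring
    exact le_of_mul_le_mul_left h2 hP0
  have hen := G.energy hc hfin hμ0 hN hg hg2 hG2 (e := 3 ^ N * e)
    (fun w hw => G.kernel hgi hμ0 hmom hw)
  set E := ∫ x in Ω, ‖gradient g x‖ ^ 2
  set Y := ∫ x in Ω, g x ^ 2
  set s := √(N : ℝ) ^ n with hs
  have hs0 : 0 < s := by positivity
  have hsN : s ≤ (N : ℝ) ^ n := by
    have : √(N : ℝ) ≤ N := by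
      rw [Real.sqrt_le_left (by linarith)]; nlinarith
    rw [hs]; gcongr
  have hpi : (Real.pi / (N * q)) ^ ((n : ℝ) / 2) = (Real.pi / q) ^ ((n : ℝ) / 2) / s := by
    rw [show Real.pi / (N * q) = Real.pi / q / N by field_simp,
      Real.div_rpow (by positivity) (by positivity), hs, Real.sqrt_eq_rpow, ← Real.rpow_natCast,
      ← Real.rpow_mul (by positivity)]
    congr 2; ring
  rw [hpi] at hen
  change (R ^ 2) ^ (-μ) * (1 / 2 * (R ^ 2) ^ (-μ) * (d / (2 * R)) ^ n * v / s) * Y -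
    κ * κ / (N * q) * ((Real.pi / q) ^ ((n : ℝ) / 2) / s) * E ≤ 2 * (κ * (3 ^ N * e) * M) at hen
  have hen2 : (c₁ * Y - c₂ * E / N) / s ≤ 2 * (κ * (3 ^ N * e) * M) := by
    refine le_trans (le_of_eq ?_) hen
    rw [hc₁, hc₂]
    generalize (Real.pi / q) ^ ((n : ℝ) / 2) = ϖ
    ring
  -- the scale `N` is large enough for the Dirichlet term to be absorbed
  have hE2 : c₂ * E / N ≤ c₁ / 2 * Y := by
    rw [div_le_iff₀ (by linarith)]
    rw [div_mul_eq_mul_div, div_le_iff₀ hc₁0] at hNE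
    linarith
  have hU' : 0 ≤ e := by rw [he]; positivity
  have hYs := Real.sq_sqrt hpos.le
  have hY0 : 0 < √Y := Real.sqrt_pos.2 hpos
  set y := √Y with hy
  have h5 : c₁ / 2 * y ^ 2 ≤ s * (2 * (κ * (3 ^ N * e) * M)) := by
    rw [div_le_iff₀ hs0] at hen2
    rw [hYs]; linarith
  have h6 : c₁ / 2 * y ^ 2 ≤ (N : ℝ) ^ n * (2 * (κ * (3 ^ N * e) * (√v * y))) := by
    refine h5.trans ?_
    gcongr
  have h7 : y ≤ T N * (C₁ / P ^ (n + 1) * ε + C₂ * h * M) := by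
    have : c₁ / 2 * y * y ≤ c₁ / 2 * (T N * (C₁ / P ^ (n + 1) * ε + C₂ * h * M)) * y := by
      calc c₁ / 2 * y * y = c₁ / 2 * y ^ 2 := by ring
        _ ≤ _ := h6
        _ = _ := by rw [he]; simp only [hT]; field_simp; ring
    have := le_of_mul_le_mul_right this hY0
    exact le_of_mul_le_mul_left this (by positivity)
  have h8 : T N * (C₂ * h * M) ≤ y / 2 := by
    have h9 : 2 * C₂ * √v * T N * h ≤ 1 := by
      rw [hh, ← div_eq_mul_inv, div_le_one hW0]
      simp only [hW]; linarith
    calc T N * (C₂ * h * M) ≤ T N * (C₂ * h * (√v * y)) := by gcongr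
      _ = (2 * C₂ * √v * T N * h) * (y / 2) := by ring
      _ ≤ 1 * (y / 2) := by gcongr
      _ = _ := one_mul _
  have h10 : (1 : ℝ) / P ^ (n + 1) = W N ^ ((5 * (n + 1)) * N + 4 * (n + 1)) := by
    rw [hP, hh, inv_pow, inv_pow, one_div, inv_inv, ← pow_mul]
    congr 1; ring
  rw [mul_add] at h7
  calc y ≤ 2 * (T N * (C₁ / P ^ (n + 1) * ε)) := by linarith
    _ = 2 * C₁ * T N * (1 / P ^ (n + 1)) * ε := by ring
    _ = _ := by rw [h10]
end

/-! ### Choice of the scale -/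

/-- Two bounded sets with disjoint closures lie at mutual distances in some interval `[d, R]`,
where `0 < d ≤ 1 ≤ R`. -/
lemma exists_dist_bounds {F : Type*} [NormedAddCommGroup F] [ProperSpace F] {A B : Set F}
    (hA : Bornology.IsBounded A) (hB : Bornology.IsBounded B)
    (h : Disjoint (closure A) (closure B)) :
    ∃ d R : ℝ, 0 < d ∧ d ≤ 1 ∧ 1 ≤ R ∧ ∀ x ∈ A, ∀ y ∈ B, d ≤ ‖x - y‖ ∧ ‖x - y‖ ≤ R := by
  obtain ⟨δ, hδ, hd⟩ := h.exists_thickenings hA.isCompact_closure isClosed_closure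
  obtain ⟨a, ha⟩ := hA.exists_norm_le
  obtain ⟨b, hb⟩ := hB.exists_norm_le
  refine ⟨min δ 1, max 1 (a + b), lt_min hδ one_pos, min_le_right _ _, le_max_left _ _,
    fun x hx y hy => ⟨?_, ?_⟩⟩
  · by_contra! hlt
    refine Set.disjoint_left.1 hd
      (Metric.mem_thickening_iff.2 ⟨x, subset_closure hx, ?_⟩)
      (Metric.self_subset_thickening hδ _ (subset_closure hy))
    rw [dist_comm, dist_eq_norm]
    exact hlt.trans_le (min_le_left _ _)
  · exact (norm_sub_le x y).trans ((add_le_add (ha x hx) (hb y hy)).trans (le_max_right _ _))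

/-- The scale `N` is taken comparable to `ρ ^ 2`, so that a factor of moderate growth in `N` is
bounded by the exponential of a power of `ρ`. -/
lemma exp_scale_le {C₀ ρ : ℝ} (hC : 0 < C₀) (hρ : 1 ≤ ρ) (p : ℕ) {t : ℝ} (ht0 : 0 ≤ t)
    (ht : t ≤ C₀ * ρ ^ 2 + 4) :
    ρ * Real.exp (t ^ p) ≤ Real.exp (((C₀ + 4) ^ p + 2) * (1 + ρ ^ ((2 * p + 1 : ℕ) : ℝ))) := by
  have h1 : ρ ≤ Real.exp ρ := by linarith [Real.add_one_le_exp ρ]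
  have h2 : t ^ p ≤ (C₀ + 4) ^ p * ρ ^ (2 * p + 1) := by
    calc t ^ p ≤ ((C₀ + 4) * ρ ^ 2) ^ p := by
          gcongr
          nlinarith [one_le_pow₀ hρ (n := 2)]
      _ = (C₀ + 4) ^ p * ρ ^ (2 * p) := by rw [mul_pow, ← pow_mul]
      _ ≤ _ := by gcongr; omega
  have h3 : ρ ≤ ρ ^ (2 * p + 1) := le_self_pow₀ hρ (by omega)
  have h4 : 0 ≤ (C₀ + 4) ^ p := by positivity
  calc ρ * Real.exp (t ^ p) ≤ Real.exp ρ * Real.exp (t ^ p) := by gcongr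
    _ = Real.exp (ρ + t ^ p) := (Real.exp_add _ _).symm
    _ ≤ _ := by
      rw [Real.exp_le_exp, Real.rpow_natCast]
      nlinarith

theorem stmt_16 (n : ℕ) (hn : 2 ≤ n) (Ω₁ Ω₂ : Set (EuclideanSpace ℝ (Fin n)))
    (hΩ₁o : IsOpen Ω₁) (hΩ₁b : Bornology.IsBounded Ω₁) (hΩ₁ne : Ω₁.Nonempty)
    (hΩ₂o : IsOpen Ω₂) (hΩ₂b : Bornology.IsBounded Ω₂) (hΩ₂ne : Ω₂.Nonempty)
    (hΩ₂conv : Convex ℝ Ω₂)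
    (hdisj : Disjoint (closure Ω₁) (closure Ω₂)) :
    ∃ σ C : ℝ, 0 < σ ∧ 1 < C ∧
      ∀ g : EuclideanSpace ℝ (Fin n) → ℝ, Differentiable ℝ g →
        IntegrableOn (fun x => (g x) ^ 2) Ω₂ volume →
        IntegrableOn (fun x => ‖gradient g x‖ ^ 2) Ω₂ volume →
        0 < (∫ x in Ω₂, (g x) ^ 2) →
        Real.sqrt (∫ x in Ω₂, ((g x) ^ 2 + ‖gradient g x‖ ^ 2)) ≤
          Real.exp (C * (1 +
              (Real.sqrt (∫ x in Ω₂, ((g x) ^ 2 + ‖gradient g x‖ ^ 2)) /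
                Real.sqrt (∫ x in Ω₂, (g x) ^ 2)) ^ σ)) *
            Real.sqrt (∑ j : Fin n, ∫ x in Ω₁, (truncRiesz n Ω₂ j g x) ^ 2) := by
  obtain ⟨d, R, hd, hd1, hR, hdR⟩ := exists_dist_bounds hΩ₁b hΩ₂b hdisj
  obtain ⟨x₀, hx₀⟩ := hΩ₁ne
  obtain ⟨r₀, hr₀, hr₀s⟩ := Metric.nhds_basis_closedBall.mem_iff.1 (hΩ₁o.mem_nhds hx₀)
  have hsub : Metric.closedBall x₀ (min r₀ 1) ⊆ Ω₁ :=
    (Metric.closedBall_subset_closedBall (min_le_left _ _)).trans hr₀s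
  have G : Geo Ω₂ x₀ (min r₀ 1) d R :=
    { meas := hΩ₂o.measurableSet
      r_pos := lt_min hr₀ one_pos
      r_le := min_le_right _ _
      d_pos := hd
      d_le := hd1
      R_ge := hR
      lower := fun x hx y hy => (hdR x (hsub hx) y hy).1
      upper := fun x hx y hy => (hdR x (hsub hx) y hy).2 }
  have hfin : volume Ω₂ < ⊤ := hΩ₂b.measure_lt_top
  have hv : 0 < volume.real Ω₂ := ENNReal.toReal_pos (hΩ₂o.measure_pos _ hΩ₂ne).ne' hfin.ne
  obtain ⟨C₀, hC₀, W, ⟨p, hp⟩, hmain⟩ := G.main (by omega) hΩ₂conv hfin hv hΩ₁o hΩ₁b hsub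
    (fun x hx y hy => (hdR x hx y hy).1) (fun x hx y hy => (hdR x hx y hy).2)
  have hCp : 0 < (C₀ + 4) ^ p := by positivity
  refine ⟨((2 * p + 1 : ℕ) : ℝ), (C₀ + 4) ^ p + 2, by positivity, by linarith, ?_⟩
  intro g hg hg2 hG2 hpos
  have hE0 : 0 ≤ ∫ x in Ω₂, ‖gradient g x‖ ^ 2 := integral_nonneg fun _ => sq_nonneg _
  have hmain := fun N hN => hmain N hN g hg hg2 hG2 hpos
  rw [integral_add hg2 hG2]
  set E := ∫ x in Ω₂, ‖gradient g x‖ ^ 2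
  set Y := ∫ x in Ω₂, g x ^ 2
  set ε := √(∑ j, ∫ x in Ω₁, truncRiesz n Ω₂ j g x ^ 2)
  have hε : 0 ≤ ε := Real.sqrt_nonneg _
  set ρ := √(Y + E) / √Y with hρ
  have hYs : 0 < √Y := Real.sqrt_pos.2 hpos
  have hρ1 : 1 ≤ ρ := by
    rw [hρ, one_le_div hYs]
    exact Real.sqrt_le_sqrt (by linarith)
  have hρY : ρ * √Y = √(Y + E) := div_mul_cancel₀ _ hYs.ne'
  have hρ2 : ρ ^ 2 * Y = Y + E := by
    rw [hρ, div_pow, Real.sq_sqrt hpos.le, Real.sq_sqrt (by linarith), div_mul_cancel₀ _ hpos.ne']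
  have hCρ : 0 ≤ C₀ * ρ ^ 2 := by positivity
  set N := ⌈C₀ * ρ ^ 2⌉₊ + 1 with hN
  have hN1 : C₀ * ρ ^ 2 ≤ N := by
    have := Nat.le_ceil (C₀ * ρ ^ 2)
    rw [hN]; push_cast; linarith
  have hN2 : (N : ℝ) ≤ C₀ * ρ ^ 2 + 2 := by
    have := Nat.ceil_lt_add_one hCρ
    rw [hN]; push_cast; linarith
  have hY := hmain N (by omega) (by
    calc C₀ * E ≤ C₀ * (ρ ^ 2 * Y) := by rw [hρ2]; gcongr; linarith
      _ = C₀ * ρ ^ 2 * Y := by ring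
      _ ≤ N * Y := by gcongr)
  calc √(Y + E) = ρ * √Y := hρY.symm
    _ ≤ ρ * (Real.exp (((N : ℝ) + 2) ^ p) * ε) := by
      gcongr
      refine hY.trans ?_
      gcongr
      exact (le_abs_self _).trans (hp N)
    _ = ρ * Real.exp (((N : ℝ) + 2) ^ p) * ε := by ring
    _ ≤ _ := by
      gcongr
      exact exp_scale_le hC₀ hρ1 p (by positivity) (by linarith)
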